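/- Let G be a countable discrete amenable group acting continuously on a compact metric space (X,d), let μ be a G-invariant, G-ergodic Borel probability measure on X, and let {F_n} be a tempered Følner sequence in G with lim_{n→∞} |F_n|/log n = ∞. Then for every δ > 0 and μ-almost every x ∈ X, limsup_{n→∞} −(1/|F_n|) log μ(B_{F_n}(x,δ)) ≤ h_μ(X,G). -/

import Mathlib

open Filter Set MeasureTheory Topology ENNReal Pointwise

variable {G X : Type*}

section Defs

variable [Group G] [MetricSpace X] [MulAction G X]

/-- The Bowen ball `B_F(x,ε) = {y : d(gx,gy) < ε for all g ∈ F}`. -/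
def bowenBall (F : Finset G) (x : X) (ε : ℝ) : Set X :=
  {y : X | ∀ g ∈ F, dist (g • x) (g • y) < ε}

/-- A Følner sequence: `|F_n ∆ gF_n|/|F_n| → 0` for every `g ∈ G`. -/
def IsFolnerSeq (F : ℕ → Finset G) : Prop :=
  ∀ g : G, Tendsto
    (fun n => ((symmDiff (F n : Set G) ((g * ·) '' (F n : Set G))).ncard : ℝ) / (F n).card)
    atTop (𝓝 0)

/-- A tempered sequence: `|⋃_{k<n} F_k⁻¹ F_n| ≤ C |F_n|` for all `n`. -/
def IsTemperedSeq (F : ℕ → Finset G) : Prop :=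
  ∃ C : ℝ, 0 < C ∧ ∀ n : ℕ,
    ((⋃ k ∈ Finset.range n, ((F k : Set G)⁻¹ * (F n : Set G))).ncard : ℝ) ≤ C * (F n).card

/-- The growth condition `lim_n |F_n| / log n = ∞`. -/
def GrowthCond (F : ℕ → Finset G) : Prop :=
  Tendsto (fun n : ℕ => ((F n).card : ℝ) / Real.log n) atTop atTop

/-- `M(Z,N,ε,s,{F_n})`: infimum of `∑ exp(-s |F_{n_i}|)` over countable families of Bowen
balls `B_{F_{n_i}}(x_i,ε)`, `n_i ≥ N`, covering `Z`. -/
noncomputable def ballM (F : ℕ → Finset G) (Z : Set X) (N : ℕ) (ε s : ℝ) : ℝ≥0∞ :=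
  ⨅ (I : Set (X × ℕ)) (_ : I.Countable) (_ : ∀ p ∈ I, N ≤ p.2)
    (_ : Z ⊆ ⋃ p ∈ I, bowenBall (F p.2) p.1 ε),
    ∑' p : I, ENNReal.ofReal (Real.exp (-s * ((F (p : X × ℕ).2).card : ℝ)))

/-- `M(Z,ε,s,{F_n}) = lim_{N→∞} M(Z,N,ε,s,{F_n})` (the quantity is nondecreasing in `N`). -/
noncomputable def ballMN (F : ℕ → Finset G) (Z : Set X) (ε s : ℝ) : ℝ≥0∞ :=
  ⨆ N : ℕ, ballM F Z N ε s

/-- `M(Z,s,{F_n}) = lim_{ε→0} M(Z,ε,s,{F_n})` (the quantity is nondecreasing as `ε` decreases). -/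
noncomputable def ballMtot (F : ℕ → Finset G) (Z : Set X) (s : ℝ) : ℝ≥0∞ :=
  ⨆ (ε : ℝ) (_ : 0 < ε), ballMN F Z ε s

/-- The Bowen topological entropy of `Z` along `{F_n}`: the critical value of `s` at which
`M(Z,s,{F_n})` jumps from `+∞` to `0`, i.e. `inf {s : M(Z,s,{F_n}) = 0}`. -/
noncomputable def bowenEnt (F : ℕ → Finset G) (Z : Set X) : ℝ≥0∞ :=
  ⨅ (s : ℝ) (_ : ballMtot F Z s = 0), ENNReal.ofReal s

/-- The weighted quantity `W(f,N,ε,s,{F_n})`. -/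
noncomputable def wtW (F : ℕ → Finset G) (f : X → ℝ≥0∞) (N : ℕ) (ε s : ℝ) : ℝ≥0∞ :=
  ⨅ (I : Set (X × ℕ)) (c : X × ℕ → ℝ≥0∞) (_ : I.Countable)
    (_ : ∀ p ∈ I, N ≤ p.2 ∧ 0 < c p ∧ c p < ⊤)
    (_ : ∀ x : X, f x ≤ ∑' p : I, c (p : X × ℕ) *
        (bowenBall (F (p : X × ℕ).2) (p : X × ℕ).1 ε).indicator (fun _ => (1 : ℝ≥0∞)) x),
    ∑' p : I, c (p : X × ℕ) * ENNReal.ofReal (Real.exp (-s * ((F (p : X × ℕ).2).card : ℝ)))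

/-- `W(Z,N,ε,s,{F_n}) = W(χ_Z,N,ε,s,{F_n})`. -/
noncomputable def wtWset (F : ℕ → Finset G) (Z : Set X) (N : ℕ) (ε s : ℝ) : ℝ≥0∞ :=
  wtW F (Z.indicator fun _ => (1 : ℝ≥0∞)) N ε s

/-- `W(Z,ε,s,{F_n}) = lim_{N→∞} W(Z,N,ε,s,{F_n})`. -/
noncomputable def wtWN (F : ℕ → Finset G) (Z : Set X) (ε s : ℝ) : ℝ≥0∞ :=
  ⨆ N : ℕ, wtWset F Z N ε s

/-- `W(Z,s,{F_n}) = lim_{ε→0} W(Z,ε,s,{F_n})`. -/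
noncomputable def wtWtot (F : ℕ → Finset G) (Z : Set X) (s : ℝ) : ℝ≥0∞ :=
  ⨆ (ε : ℝ) (_ : 0 < ε), wtWN F Z ε s

/-- The weighted Bowen topological entropy of `Z` along `{F_n}`. -/
noncomputable def wtBowenEnt (F : ℕ → Finset G) (Z : Set X) : ℝ≥0∞ :=
  ⨅ (s : ℝ) (_ : wtWtot F Z s = 0), ENNReal.ofReal s

/-- A finite open cover of `X`. -/
def IsFinOpenCover (𝒰 : Finset (Set X)) : Prop :=
  (∀ U ∈ 𝒰, IsOpen U) ∧ ⋃₀ (𝒰 : Set (Set X)) = Set.univ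

/-- `N(⋁_{g∈F} g⁻¹𝒰)`: the minimal cardinality of a subcover of the refined cover, whose members
are the sets `X(𝐔) = ⋂_{g∈F} g⁻¹ U_g` with `U_g ∈ 𝒰`. -/
noncomputable def coverNum (𝒰 : Finset (Set X)) (F : Finset G) : ℕ :=
  sInf {k : ℕ | ∃ Λ : Finset (G → Set X), Λ.card = k ∧
    (∀ u ∈ Λ, ∀ g ∈ F, u g ∈ 𝒰) ∧
    (⋃ u ∈ Λ, ⋂ g ∈ F, (fun y => g • y) ⁻¹' u g) = Set.univ}

/-- `h_top(G,𝒰) = lim_n (1/|F_n|) log N(⋁_{g∈F_n} g⁻¹𝒰)` (the limit exists by Ornstein–Weiss,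
hence equals the `limsup`). -/
noncomputable def coverTopEnt (F : ℕ → Finset G) (𝒰 : Finset (Set X)) : ℝ :=
  limsup (fun n => Real.log (coverNum 𝒰 (F n)) / (F n).card) atTop

/-- The topological entropy `h_top(X,G)`, the supremum over finite open covers. -/
noncomputable def topEnt (X : Type*) [MetricSpace X] [MulAction G X] (F : ℕ → Finset G) : ℝ≥0∞ :=
  ⨆ (𝒰 : Finset (Set X)) (_ : IsFinOpenCover 𝒰), ENNReal.ofReal (coverTopEnt F 𝒰)

/-- `M(Z,𝒰,N,s,{F_n})`: infimum of `∑_{𝐔∈Λ} exp(-s m(𝐔))` over collections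
`Λ ⊆ ⋃_{j≥N} 𝒲_{F_j}(𝒰)` covering `Z`; an element `𝐔 ∈ 𝒲_{F_j}(𝒰)` is encoded as a pair
`(j, u)` with `u g ∈ 𝒰` for `g ∈ F_j` (and `u g = ∅` elsewhere), `X(𝐔) = ⋂_{g∈F_j} g⁻¹ (u g)`
and `m(𝐔) = |F_j|`. -/
noncomputable def covM (F : ℕ → Finset G) (𝒰 : Finset (Set X)) (Z : Set X) (N : ℕ) (s : ℝ) :
    ℝ≥0∞ :=
  ⨅ (Λ : Set (ℕ × (G → Set X)))
    (_ : ∀ p ∈ Λ, N ≤ p.1 ∧ (∀ g ∈ F p.1, p.2 g ∈ 𝒰) ∧ (∀ g ∉ F p.1, p.2 g = ∅))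
    (_ : Z ⊆ ⋃ p ∈ Λ, ⋂ g ∈ F p.1, (fun y => g • y) ⁻¹' p.2 g),
    ∑' p : Λ, ENNReal.ofReal (Real.exp (-s * ((F (p : ℕ × (G → Set X)).1).card : ℝ)))

/-- `M(Z,𝒰,s,{F_n}) = lim_{N→∞} M(Z,𝒰,N,s,{F_n})`. -/
noncomputable def covMtot (F : ℕ → Finset G) (𝒰 : Finset (Set X)) (Z : Set X) (s : ℝ) : ℝ≥0∞ :=
  ⨆ N : ℕ, covM F 𝒰 Z N s

/-- The cover-based Bowen topological entropy `h^B_top(𝒰,Z,{F_n}) = inf {s : M(Z,𝒰,s,{F_n}) = 0}`. -/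
noncomputable def covBowenEnt (F : ℕ → Finset G) (𝒰 : Finset (Set X)) (Z : Set X) : ℝ≥0∞ :=
  ⨅ (s : ℝ) (_ : covMtot F 𝒰 Z s = 0), ENNReal.ofReal s

/-- `diam(𝒰) = max {diam U : U ∈ 𝒰}`. -/
noncomputable def coverDiam (𝒰 : Finset (Set X)) : ℝ≥0∞ :=
  ⨆ U ∈ 𝒰, EMetric.diam U

end Defs

section MeasureDefs

variable [Group G] [MetricSpace X] [MulAction G X] [MeasurableSpace X]

/-- The quantity `-(1/m) log μ(B)`, with value `+∞` when `μ B = 0`. -/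
noncomputable def locTerm (μ : Measure X) (B : Set X) (m : ℕ) : ℝ≥0∞ :=
  if μ B = 0 then ⊤ else ENNReal.ofReal (-(Real.log ((μ B).toReal)) / (m : ℝ))

/-- The lower local entropy `h̲_μ^{loc}(x,ε,{F_n}) = liminf_n -(1/|F_n|) log μ(B_{F_n}(x,ε))`. -/
noncomputable def lowLoc (μ : Measure X) (F : ℕ → Finset G) (x : X) (ε : ℝ) : ℝ≥0∞ :=
  liminf (fun n => locTerm μ (bowenBall (F n) x ε) (F n).card) atTop

/-- The upper local entropy `limsup_n -(1/|F_n|) log μ(B_{F_n}(x,ε))`. -/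
noncomputable def upLoc (μ : Measure X) (F : ℕ → Finset G) (x : X) (ε : ℝ) : ℝ≥0∞ :=
  limsup (fun n => locTerm μ (bowenBall (F n) x ε) (F n).card) atTop

/-- `h̲_μ^{loc}(x,{F_n}) = lim_{ε→0} h̲_μ^{loc}(x,ε,{F_n})` (a monotone limit, i.e. the
supremum over `ε > 0`). -/
noncomputable def lowLocPt (μ : Measure X) (F : ℕ → Finset G) (x : X) : ℝ≥0∞ :=
  ⨆ (ε : ℝ) (_ : 0 < ε), lowLoc μ F x ε

/-- `h̲_μ^{loc}({F_n}) = ∫_X h̲_μ^{loc}(x,{F_n}) dμ(x)`. -/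
noncomputable def lowLocEnt (μ : Measure X) (F : ℕ → Finset G) : ℝ≥0∞ :=
  ∫⁻ x, lowLocPt μ F x ∂μ

/-- A finite measurable partition of `X`, presented as `P : Fin k → Set X`. -/
def IsMeasPartition {k : ℕ} (P : Fin k → Set X) : Prop :=
  (∀ i, MeasurableSet (P i)) ∧ Pairwise (Function.onFun Disjoint P) ∧ (⋃ i, P i) = Set.univ

/-- The static entropy `H_μ(𝒫_F)` of the join `𝒫_F = ⋁_{g∈F} g⁻¹𝒫`; its atoms are the
nonempty sets `⋂_{g∈F} g⁻¹ P(u g)` (distinct choices `u` yield disjoint atoms, and empty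
atoms contribute `0`). -/
noncomputable def partH (μ : Measure X) {k : ℕ} (P : Fin k → Set X) (F : Finset G) : ℝ :=
  letI := Classical.decEq G
  ∑ u : (↥F → Fin k),
    Real.negMulLog ((μ (⋂ g : ↥F, (fun y => (g : G) • y) ⁻¹' P (u g))).toReal)

/-- `h_μ(G,𝒫) = liminf_n (1/|F_n|) H_μ(𝒫_{F_n})`. -/
noncomputable def partEnt (μ : Measure X) (F : ℕ → Finset G) {k : ℕ} (P : Fin k → Set X) : ℝ :=
  liminf (fun n => partH μ P (F n) / (F n).card) atTop

/-- The measure-theoretic entropy `h_μ(X,G) = sup_𝒫 h_μ(G,𝒫)` (it is independent of the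
Følner sequence used to compute it). -/
noncomputable def measEnt (μ : Measure X) (F : ℕ → Finset G) : ℝ≥0∞ :=
  ⨆ (k : ℕ) (P : Fin k → Set X) (_ : IsMeasPartition P), ENNReal.ofReal (partEnt μ F P)

/-- Ergodicity of the `G`-action w.r.t. `μ`. -/
def IsErgodicGAction (G : Type*) [Group G] [MulAction G X] (μ : Measure X) : Prop :=
  ∀ A : Set X, MeasurableSet A → (∀ g : G, (g • ·) ⁻¹' A = A) → μ A = 0 ∨ μ A = 1

end MeasureDefs
section HelpersA

open Classical Finset

/-- Level-by-level covering lemma for tempered sequences. -/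
theorem bk_cover [Group G] (F : ℕ → Finset G) (C : ℝ)
    (hT : ∀ n : ℕ, ((⋃ k ∈ Finset.range n,
      ((F k : Set G)⁻¹ * (F n : Set G))).ncard : ℝ) ≤ C * (F n).card)
    (f : G → ℝ) (hf : ∀ g, 0 ≤ f g) (lam : ℝ) (hlam : 0 < lam) (hC : 0 < C) :
    ∀ (N : ℕ) (B : ℕ → Finset G),
      (∀ k < N, ∀ a ∈ B k, lam * (F k).card < ∑ h ∈ F k, f (h * a)) →
      lam * (((Finset.range N).biUnion B).card : ℝ) ≤
        (2 * C + 2) * ∑ g ∈ (Finset.range N).biUnion (fun k => F k * B k), f g := by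
  intro N
  induction N with
  | zero => intro B _; simp
  | succ N ih =>
    intro B hB
    -- choose a maximal subfamily at the top level
    let good : Finset (Finset G) := (B N).powerset.filter
      (fun S => lam / 2 * (F N).card * S.card ≤ ∑ g ∈ F N * S, f g)
    have hgne : good.Nonempty := ⟨∅, by simp [good]⟩
    obtain ⟨S, hSg, hSmax⟩ := Finset.exists_max_image good Finset.card hgne
    have hS : S ⊆ B N ∧ lam / 2 * (F N).card * S.card ≤ ∑ g ∈ F N * S, f g := by
      simpa [good] using hSg
    obtain ⟨hSB, hSf⟩ := hS
    set V := F N * S with hV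
    set fV := ∑ g ∈ V, f g with hfV
    have hfV0 : 0 ≤ fV := Finset.sum_nonneg fun _ _ => hf _
    have hsumtr : ∀ (A : Finset G) (a : G), ∑ g ∈ A * {a}, f g = ∑ h ∈ A, f (h * a) := by
      intro A a
      have hAa : A * {a} = A.image (fun h => h * a) := by
        ext x
        simp only [Finset.mem_mul, Finset.mem_image, Finset.mem_singleton, exists_eq_left]
      rw [hAa, Finset.sum_image]
      intro x _ y _ h
      exact mul_right_cancel h
    -- each point of the top level sees half its mass in V
    have hhalf : ∀ a ∈ B N, lam / 2 * (F N).card ≤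
        ∑ h ∈ (F N).filter (fun h => h * a ∈ V), f (h * a) := by
      intro a ha
      have hba := hB N (Nat.lt_succ_self N) a ha
      have hcard0 : (0:ℝ) ≤ (F N).card := by positivity
      by_cases haS : a ∈ S
      · have : (F N).filter (fun h => h * a ∈ V) = F N := by
          apply Finset.filter_true_of_mem
          intro h hh
          exact Finset.mul_mem_mul hh haS
        rw [this]
        nlinarith
      · by_contra hcon
        push Not at hcon
        have hins : insert a S ∈ good := by
          have hsplit : ∑ h ∈ F N, f (h * a) =
              ∑ h ∈ (F N).filter (fun h => h * a ∈ V), f (h * a) +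
              ∑ h ∈ (F N).filter (fun h => ¬ h * a ∈ V), f (h * a) :=
            (Finset.sum_filter_add_sum_filter_not _ _ _).symm
          have hnew : ∑ g ∈ F N * insert a S, f g ≥ fV +
              ∑ h ∈ (F N).filter (fun h => ¬ h * a ∈ V), f (h * a) := by
            rw [← hsumtr, hfV, ← Finset.sum_union]
            · apply Finset.sum_le_sum_of_subset_of_nonneg
              · intro x hx
                rcases Finset.mem_union.1 hx with hx | hx
                · exact Finset.mul_subset_mul_left (Finset.subset_insert a S) hx
                · obtain ⟨h, hh, b, hb, rfl⟩ := Finset.mem_mul.1 hx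
                  rw [Finset.mem_singleton] at hb
                  subst hb
                  exact Finset.mul_mem_mul (Finset.mem_filter.1 hh).1 (Finset.mem_insert_self _ _)
              · intro _ _ _; exact hf _
            · rw [Finset.disjoint_left]
              intro x hx hx'
              obtain ⟨h, hh, b, hb, rfl⟩ := Finset.mem_mul.1 hx'
              rw [Finset.mem_singleton] at hb
              subst hb
              exact (Finset.mem_filter.1 hh).2 hx
          simp only [good, Finset.mem_filter, Finset.mem_powerset]
          refine ⟨Finset.insert_subset ha hSB, ?_⟩
          rw [Finset.card_insert_of_notMem haS]
          push_cast
          nlinarith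
        have := hSmax _ hins
        rw [Finset.card_insert_of_notMem haS] at this
        omega
    have htop : lam * (B N).card ≤ 2 * fV := by
      by_cases hFN : (F N).card = 0
      · have : B N = ∅ := by
          rw [Finset.eq_empty_iff_forall_notMem]
          intro a ha
          have := hB N (Nat.lt_succ_self N) a ha
          rw [Finset.card_eq_zero] at hFN
          simp [hFN] at this
        rw [this]; simp; linarith
      · have hpos : (0:ℝ) < (F N).card := by exact_mod_cast Nat.pos_of_ne_zero hFN
        have h1 : (B N).card * (lam / 2 * (F N).card) ≤
            ∑ a ∈ B N, ∑ h ∈ (F N).filter (fun h => h * a ∈ V), f (h * a) := by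
          rw [← nsmul_eq_mul]
          exact Finset.card_nsmul_le_sum _ _ _ hhalf
        have h2 : ∑ a ∈ B N, ∑ h ∈ (F N).filter (fun h => h * a ∈ V), f (h * a) ≤
            (F N).card * fV := by
          simp_rw [Finset.sum_filter]
          rw [Finset.sum_comm, ← nsmul_eq_mul]
          apply Finset.sum_le_card_nsmul
          intro h _
          rw [← Finset.sum_filter]
          have : ∑ a ∈ (B N).filter (fun a => h * a ∈ V), f (h * a) =
              ∑ g ∈ ((B N).filter (fun a => h * a ∈ V)).image (fun a => h * a), f g := by
            rw [Finset.sum_image]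
            intro x _ y _ hxy
            exact mul_left_cancel hxy
          rw [this]
          apply Finset.sum_le_sum_of_subset_of_nonneg
          · intro x hx
            obtain ⟨a, ha, rfl⟩ := Finset.mem_image.1 hx
            exact (Finset.mem_filter.1 ha).2
          · intro _ _ _; exact hf _
        have h3 : (F N).card * (lam * (B N).card) ≤ (F N).card * (2 * fV) := by nlinarith
        exact le_of_mul_le_mul_left h3 hpos
    -- lower levels
    let B' : ℕ → Finset G := fun k => (B k).filter (fun a => Disjoint (F k * {a}) V)
    have hB' : ∀ k < N, ∀ a ∈ B' k, lam * (F k).card < ∑ h ∈ F k, f (h * a) := by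
      intro k hk a ha
      exact hB k (by omega) a (Finset.mem_filter.1 ha).1
    have hih := ih B' hB'
    let T : Finset G := (Finset.range N).biUnion (fun k => (F k)⁻¹ * F N)
    have hTcard : (T.card : ℝ) ≤ C * (F N).card := by
      have := hT N
      have hTe : (T : Set G) = ⋃ k ∈ Finset.range N, ((F k : Set G)⁻¹ * (F N : Set G)) := by
        simp [T]
      rw [← hTe, Set.ncard_coe_finset] at this
      exact this
    have hTS : lam * ((T * S).card : ℝ) ≤ 2 * C * fV := by
      have h1 : ((T * S).card : ℝ) ≤ T.card * S.card := by
        exact_mod_cast Finset.card_mul_le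
      have h2 : ((T * S).card : ℝ) ≤ C * (F N).card * S.card :=
        h1.trans (by gcongr)
      have h3 : lam * ((T * S).card : ℝ) ≤ lam * (C * (F N).card * S.card) := by gcongr
      nlinarith
    have hcov : (Finset.range (N+1)).biUnion B ⊆
        ((Finset.range N).biUnion B' ∪ (T * S)) ∪ B N := by
      intro a ha
      obtain ⟨k, hk, hak⟩ := Finset.mem_biUnion.1 ha
      rw [Finset.mem_range] at hk
      by_cases hkN : k = N
      · subst hkN; exact Finset.mem_union_right _ hak
      · apply Finset.mem_union_left
        have hkN' : k < N := by omega
        by_cases hd : Disjoint (F k * {a}) V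
        · apply Finset.mem_union_left
          exact Finset.mem_biUnion.2 ⟨k, Finset.mem_range.2 hkN', Finset.mem_filter.2 ⟨hak, hd⟩⟩
        · apply Finset.mem_union_right
          rw [Finset.not_disjoint_iff] at hd
          obtain ⟨x, hx1, hx2⟩ := hd
          obtain ⟨h, hh, b, hb, rfl⟩ := Finset.mem_mul.1 hx1
          rw [Finset.mem_singleton] at hb
          subst hb
          obtain ⟨h', hh', s, hs, hse⟩ := Finset.mem_mul.1 hx2
          have : b = (h⁻¹ * h') * s := by rw [mul_assoc, hse]; group
          rw [this]
          refine Finset.mul_mem_mul (Finset.mem_biUnion.2 ⟨k, Finset.mem_range.2 hkN', ?_⟩) hs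
          exact Finset.mul_mem_mul (Finset.inv_mem_inv hh) hh'
    have hcard : (((Finset.range (N+1)).biUnion B).card : ℝ) ≤
        ((Finset.range N).biUnion B').card + (T * S).card + (B N).card := by
      have h1 := Finset.card_le_card hcov
      have h2 := Finset.card_union_le ((Finset.range N).biUnion B' ∪ (T * S)) (B N)
      have h3 := Finset.card_union_le ((Finset.range N).biUnion B') (T * S)
      exact_mod_cast (by omega)
    have hmass : ∑ g ∈ (Finset.range N).biUnion (fun k => F k * B' k), f g + fV ≤
        ∑ g ∈ (Finset.range (N+1)).biUnion (fun k => F k * B k), f g := by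
      rw [hfV, ← Finset.sum_union]
      · apply Finset.sum_le_sum_of_subset_of_nonneg
        · intro x hx
          rcases Finset.mem_union.1 hx with hx | hx
          · obtain ⟨k, hk, hxk⟩ := Finset.mem_biUnion.1 hx
            rw [Finset.mem_range] at hk
            refine Finset.mem_biUnion.2 ⟨k, Finset.mem_range.2 (by omega), ?_⟩
            exact Finset.mul_subset_mul_left (Finset.filter_subset _ _) hxk
          · refine Finset.mem_biUnion.2 ⟨N, Finset.mem_range.2 (by omega), ?_⟩
            exact Finset.mul_subset_mul_left hSB hx
        · intro _ _ _; exact hf _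
      · rw [Finset.disjoint_left]
        intro x hx hxV
        obtain ⟨k, hk, hxk⟩ := Finset.mem_biUnion.1 hx
        obtain ⟨h, hh, a, ha, rfl⟩ := Finset.mem_mul.1 hxk
        have := (Finset.mem_filter.1 ha).2
        exact Finset.disjoint_left.1 this
          (Finset.mul_mem_mul hh (Finset.mem_singleton_self a)) hxV
    calc lam * (((Finset.range (N+1)).biUnion B).card : ℝ)
        ≤ lam * (((Finset.range N).biUnion B').card + (T * S).card + (B N).card) := by gcongr
      _ ≤ (2 * C + 2) * (∑ g ∈ (Finset.range N).biUnion (fun k => F k * B' k), f g + fV) := by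
          nlinarith
      _ ≤ _ := by gcongr

end HelpersA
section HelpersB

open Classical Finset

theorem bk_invariant [Group G] (F : ℕ → Finset G) (hFol : IsFolnerSeq F)
    (hcard : Tendsto (fun n => (F n).card) atTop atTop) (T : Finset G) :
    ∃ m, 0 < (F m).card ∧ ((T * F m).card : ℝ) ≤ 2 * (F m).card := by
  have h1 : Tendsto (fun n => ∑ t ∈ T,
      ((symmDiff (F n : Set G) ((t * ·) '' (F n : Set G))).ncard : ℝ) / (F n).card)
      atTop (𝓝 (∑ t ∈ T, 0)) := tendsto_finsetSum _ (fun t _ => hFol t)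
  rw [Finset.sum_const_zero] at h1
  have h2 := h1.eventually (eventually_le_nhds (zero_lt_one))
  obtain ⟨m, hm1, hm2⟩ := (h2.and (hcard.eventually_ge_atTop 1)).exists
  refine ⟨m, hm2, ?_⟩
  have hpos : (0:ℝ) < (F m).card := by exact_mod_cast hm2
  rw [← Finset.sum_div, div_le_one hpos] at hm1
  have hsub : T * F m ⊆ F m ∪ T.biUnion (fun t => symmDiff (F m) ((F m).image (t * ·))) := by
    intro x hx
    obtain ⟨t, ht, a, ha, rfl⟩ := Finset.mem_mul.1 hx
    by_cases h : t * a ∈ F m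
    · exact Finset.mem_union_left _ h
    · apply Finset.mem_union_right
      refine Finset.mem_biUnion.2 ⟨t, ht, ?_⟩
      rw [Finset.mem_symmDiff]
      right
      exact ⟨Finset.mem_image.2 ⟨a, ha, rfl⟩, h⟩
  have hc : (T * F m).card ≤ (F m).card +
      ∑ t ∈ T, (symmDiff (F m) ((F m).image (t * ·))).card :=
    (Finset.card_le_card hsub).trans
      ((Finset.card_union_le _ _).trans (Nat.add_le_add_left Finset.card_biUnion_le _))
  have hc' : ((T * F m).card : ℝ) ≤ (F m).card +
      ∑ t ∈ T, ((symmDiff (F m) ((F m).image (t * ·))).card : ℝ) := by exact_mod_cast hc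
  have heq : ∀ t, ((symmDiff (F m) ((F m).image (t * ·))).card : ℝ) =
      ((symmDiff (F m : Set G) ((t * ·) '' (F m : Set G))).ncard : ℝ) := by
    intro t
    rw [← Set.ncard_coe_finset]
    simp
  simp_rw [heq] at hc'
  linarith

/-- Weak type maximal inequality, finitely many levels. -/
theorem bk_max [Group G] [MulAction G X] [MeasurableSpace X] [MeasurableConstSMul G X]
    (μ : Measure X) [IsProbabilityMeasure μ] [SMulInvariantMeasure G X μ]
    (F : ℕ → Finset G) (hFol : IsFolnerSeq F) (C : ℝ) (hC : 0 < C)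
    (hT : ∀ n : ℕ, ((⋃ k ∈ Finset.range n,
      ((F k : Set G)⁻¹ * (F n : Set G))).ncard : ℝ) ≤ C * (F n).card)
    (hcard : Tendsto (fun n => (F n).card) atTop atTop)
    (ψ : X → ℝ) (hψm : Measurable ψ) (hψ0 : ∀ x, 0 ≤ ψ x) (hψi : Integrable ψ μ)
    (lam : ℝ) (hlam : 0 < lam) (N : ℕ) :
    lam * μ.real {x | ∃ k < N, lam * (F k).card < ∑ h ∈ F k, ψ (h • x)} ≤
      2 * (2 * C + 2) * ∫ x, ψ x ∂μ := by
  set E := {x | ∃ k < N, lam * (F k).card < ∑ h ∈ F k, ψ (h • x)} with hE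
  have hEm : MeasurableSet E := by
    have : E = ⋃ k ∈ Finset.range N, {x | lam * (F k).card < ∑ h ∈ F k, ψ (h • x)} := by
      ext x; simp [hE]
    rw [this]
    refine Finset.measurableSet_biUnion _ fun k _ => ?_
    exact measurableSet_lt measurable_const
      (Finset.measurable_sum _ fun h _ => hψm.comp (measurable_const_smul h))
  set T := (Finset.range N).biUnion F with hTdef
  obtain ⟨m, hm, hmT⟩ := bk_invariant F hFol hcard T
  set D := F m with hD
  have hpt : ∀ x, lam * ∑ a ∈ D, E.indicator (fun _ => (1:ℝ)) (a • x) ≤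
      (2 * C + 2) * ∑ g ∈ T * D, ψ (g • x) := by
    intro x
    let B : ℕ → Finset G := fun k => D.filter
      (fun a => lam * (F k).card < ∑ h ∈ F k, ψ (h • a • x))
    have := bk_cover F C hT (fun g => ψ (g • x)) (fun g => hψ0 _) lam hlam hC N B (by
      intro k _ a ha
      have := (Finset.mem_filter.1 ha).2
      simpa [mul_smul] using this)
    have h1 : ∑ a ∈ D, E.indicator (fun _ => (1:ℝ)) (a • x) =
        ((Finset.range N).biUnion B).card := by
      have : (Finset.range N).biUnion B = D.filter (fun a => a • x ∈ E) := by
        ext a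
        simp only [B, hE, Finset.mem_biUnion, Finset.mem_filter, Finset.mem_range,
          Set.mem_ofPred_eq]
        tauto
      rw [this, Finset.card_filter]
      push_cast
      refine Finset.sum_congr rfl fun a _ => ?_
      by_cases h : a • x ∈ E <;> simp [h]
    rw [h1]
    refine this.trans ?_
    refine mul_le_mul_of_nonneg_left ?_ (by positivity)
    refine Finset.sum_le_sum_of_subset_of_nonneg ?_ (fun _ _ _ => hψ0 _)
    intro y hy
    obtain ⟨k, hk, hy⟩ := Finset.mem_biUnion.1 hy
    refine Finset.mul_subset_mul ?_ (Finset.filter_subset _ _) hy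
    exact Finset.subset_biUnion_of_mem F hk
  have hind : Integrable (E.indicator (fun _ => (1:ℝ))) μ :=
    (integrable_const (1:ℝ)).indicator hEm
  have hindg : ∀ a : G, Integrable (fun x => E.indicator (fun _ => (1:ℝ)) (a • x)) μ :=
    fun a => (measurePreserving_smul a μ).integrable_comp_of_integrable hind
  have hψg : ∀ a : G, Integrable (fun x => ψ (a • x)) μ :=
    fun a => (measurePreserving_smul a μ).integrable_comp_of_integrable hψi
  have hint := integral_mono (μ := μ)
    ((integrable_finsetSum D fun a _ => hindg a).const_mul lam)
    ((integrable_finsetSum (T * D) fun a _ => hψg a).const_mul (2 * C + 2)) hpt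
  rw [integral_const_mul, integral_const_mul, integral_finsetSum _ (fun a _ => hindg a),
    integral_finsetSum _ (fun a _ => hψg a)] at hint
  have e1 : ∀ a : G, ∫ x, E.indicator (fun _ => (1:ℝ)) (a • x) ∂μ = μ.real E := by
    intro a
    rw [integral_smul_eq_self (μ := μ) (g := a) (fun x => E.indicator (fun _ => (1:ℝ)) x)]
    rw [integral_indicator hEm]
    simp
  have e2 : ∀ a : G, ∫ x, ψ (a • x) ∂μ = ∫ x, ψ x ∂μ := by
    intro a
    exact integral_smul_eq_self (μ := μ) (g := a) ψ
  simp_rw [e1, e2] at hint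
  simp only [Finset.sum_const, nsmul_eq_mul] at hint
  have hi0 : 0 ≤ ∫ x, ψ x ∂μ := integral_nonneg hψ0
  have hpos : (0:ℝ) < D.card := by exact_mod_cast hm
  have h3 : (2 * C + 2) * (((T * D).card : ℝ) * ∫ x, ψ x ∂μ) ≤
      (2 * C + 2) * ((2 * D.card) * ∫ x, ψ x ∂μ) := by gcongr
  have h4 : D.card * (lam * μ.real E) ≤ D.card * (2 * (2 * C + 2) * ∫ x, ψ x ∂μ) := by
    nlinarith
  exact le_of_mul_le_mul_left h4 hpos

/-- Weak type maximal inequality. -/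
theorem bk_max' [Group G] [MulAction G X] [MeasurableSpace X] [MeasurableConstSMul G X]
    (μ : Measure X) [IsProbabilityMeasure μ] [SMulInvariantMeasure G X μ]
    (F : ℕ → Finset G) (hFol : IsFolnerSeq F) (C : ℝ) (hC : 0 < C)
    (hT : ∀ n : ℕ, ((⋃ k ∈ Finset.range n,
      ((F k : Set G)⁻¹ * (F n : Set G))).ncard : ℝ) ≤ C * (F n).card)
    (hcard : Tendsto (fun n => (F n).card) atTop atTop)
    (ψ : X → ℝ) (hψm : Measurable ψ) (hψ0 : ∀ x, 0 ≤ ψ x) (hψi : Integrable ψ μ)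
    (lam : ℝ) (hlam : 0 < lam) :
    lam * μ.real {x | ∃ k, lam * (F k).card < ∑ h ∈ F k, ψ (h • x)} ≤
      2 * (2 * C + 2) * ∫ x, ψ x ∂μ := by
  have hU : {x | ∃ k, lam * (F k).card < ∑ h ∈ F k, ψ (h • x)} =
      ⋃ N, {x | ∃ k < N, lam * (F k).card < ∑ h ∈ F k, ψ (h • x)} := by
    ext x
    simp only [Set.mem_ofPred_eq, Set.mem_iUnion]
    constructor
    · rintro ⟨k, hk⟩; exact ⟨k+1, k, by omega, hk⟩
    · rintro ⟨N, k, _, hk⟩; exact ⟨k, hk⟩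
  have hmono : Monotone (fun N : ℕ =>
      {x : X | ∃ k < N, lam * (F k).card < ∑ h ∈ F k, ψ (h • x)}) := by
    intro N M hNM x hx
    obtain ⟨k, hk, h⟩ := hx
    exact ⟨k, by omega, h⟩
  have hlim := tendsto_measure_iUnion_atTop (μ := μ) hmono
  rw [← hU] at hlim
  have hlim' := (ENNReal.tendsto_toReal (measure_ne_top μ _)).comp hlim
  refine le_of_tendsto (hlim'.const_mul lam) (Eventually.of_forall fun N => ?_)
  exact bk_max μ F hFol C hC hT hcard ψ hψm hψ0 hψi lam hlam N

end HelpersB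
section HelpersC

open Classical Finset

/-- A measurable, a.e. invariant function is a.e. constant. -/
theorem bk_const [Group G] [Countable G] [MetricSpace X] [MulAction G X] [MeasurableSpace X]
    [MeasurableConstSMul G X]
    (μ : Measure X) [IsProbabilityMeasure μ] [SMulInvariantMeasure G X μ]
    (herg : IsErgodicGAction G μ) (f : X → ℝ) (hf : Measurable f)
    (hinv : ∀ g : G, ∀ᵐ x ∂μ, f (g • x) = f x) : ∃ c, f =ᵐ[μ] Function.const X c := by
  refine exists_eventuallyEq_const_of_forall_separating MeasurableSet fun U hU => ?_
  set A := ⋂ g : G, (fun x : X => g • x) ⁻¹' (f ⁻¹' U) with hA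
  have hAm : MeasurableSet A :=
    MeasurableSet.iInter fun g => (measurable_const_smul g) (hf hU)
  have hAinv : ∀ g : G, (g • ·) ⁻¹' A = A := by
    intro g
    ext x
    simp only [hA, Set.mem_preimage, Set.mem_iInter]
    constructor
    · intro h k
      have := h (k * g⁻¹)
      simpa [smul_smul] using this
    · intro h k
      have := h (k * g)
      simpa [smul_smul] using this
  have hall : ∀ᵐ x ∂μ, ∀ g : G, f (g • x) = f x := ae_all_iff.2 hinv
  rcases herg A hAm hAinv with h | h
  · right
    have h0 : ∀ᵐ x ∂μ, x ∉ A := measure_eq_zero_iff_ae_notMem.1 h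
    filter_upwards [hall, h0] with x hx hxA hxU
    apply hxA
    simp only [hA, Set.mem_iInter, Set.mem_preimage]
    intro g
    rw [hx g]; exact hxU
  · left
    have h0 : ∀ᵐ x ∂μ, x ∈ A := by
      rw [← prob_compl_eq_zero_iff hAm] at h
      have := measure_eq_zero_iff_ae_notMem.1 h
      filter_upwards [this] with x hx
      simpa using hx
    filter_upwards [h0] with x hxA
    have := Set.mem_iInter.1 hxA 1
    simpa using this

theorem bk_sum_diff (A B : Finset G) (φ : G → ℝ) (h0 : ∀ g, 0 ≤ φ g) (h1 : ∀ g, φ g ≤ 1) :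
    |∑ g ∈ A, φ g - ∑ g ∈ B, φ g| ≤ ((symmDiff (A : Set G) (B : Set G)).ncard : ℝ) := by
  have hs : ((symmDiff (A : Set G) (B : Set G)).ncard : ℝ) = (A \ B).card + (B \ A).card := by
    rw [← Finset.coe_symmDiff, Set.ncard_coe_finset, symmDiff_def, Finset.sup_eq_union,
      Finset.card_union_of_disjoint]
    · push_cast; rfl
    · exact disjoint_sdiff_sdiff
  rw [hs, ← Finset.sum_sdiff_sub_sum_sdiff]
  have hA : ∑ g ∈ A \ B, φ g ≤ (A \ B).card := by
    simpa using Finset.sum_le_card_nsmul (A \ B) φ 1 (fun g _ => h1 g)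
  have hB : ∑ g ∈ B \ A, φ g ≤ (B \ A).card := by
    simpa using Finset.sum_le_card_nsmul (B \ A) φ 1 (fun g _ => h1 g)
  have hA0 : 0 ≤ ∑ g ∈ A \ B, φ g := Finset.sum_nonneg fun g _ => h0 g
  have hB0 : 0 ≤ ∑ g ∈ B \ A, φ g := Finset.sum_nonneg fun g _ => h0 g
  rw [abs_le]
  constructor <;> linarith

theorem bk_cobound [Group G] [MulAction G X] (F : ℕ → Finset G) (hFol : IsFolnerSeq F)
    (A : Set X) (g : G) (x : X) :
    Tendsto (fun n => (∑ h ∈ F n, (A.indicator (fun _ => (1:ℝ)) (h • x) -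
      A.indicator (fun _ => (1:ℝ)) (g • h • x))) / (F n).card) atTop (𝓝 0) := by
  refine squeeze_zero_norm (fun n => ?_) (hFol g)
  rw [norm_div, Real.norm_natCast, Real.norm_eq_abs]
  gcongr
  have h1 := bk_sum_diff (F n) ((F n).image (g * ·))
    (fun h => A.indicator (fun _ => (1:ℝ)) (h • x))
    (fun h => Set.indicator_nonneg (fun _ _ => zero_le_one) _)
    (fun h => Set.indicator_le_self' (fun _ _ => zero_le_one) _)
  rw [Finset.sum_image (by intro a _ b _ hab; exact mul_left_cancel hab)] at h1
  rw [Finset.sum_sub_distrib]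
  simpa [mul_smul] using h1

/-- Approximation of mean zero functions by coboundaries. -/
theorem bk_approx [Group G] [Countable G] [MetricSpace X] [MulAction G X] [MeasurableSpace X]
    [MeasurableConstSMul G X]
    (μ : Measure X) [IsProbabilityMeasure μ] [SMulInvariantMeasure G X μ]
    (herg : IsErgodicGAction G μ) (F : ℕ → Finset G) (hFol : IsFolnerSeq F)
    (ψ : X → ℝ) (hψm : Measurable ψ) (hψ : MemLp ψ 2 μ) (h0 : ∫ x, ψ x ∂μ = 0)
    (ρ : ℝ) (hρ : 0 < ρ) :
    ∃ u : X → ℝ, Measurable u ∧ Integrable u μ ∧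
      (∀ x, Tendsto (fun n => (∑ h ∈ F n, u (h • x)) / (F n).card) atTop (𝓝 0)) ∧
      ∫ x, |ψ x - u x| ∂μ ≤ ρ := by
  let V : Submodule ℝ (Lp ℝ 2 μ) :=
    { carrier := {v | ∃ u : X → ℝ, Measurable u ∧ MemLp u 2 μ ∧
        (∀ x, Tendsto (fun n => (∑ h ∈ F n, u (h • x)) / (F n).card) atTop (𝓝 0)) ∧
        v =ᵐ[μ] u}
      add_mem' := by
        rintro a b ⟨u, hu1, hu2, hu3, hu4⟩ ⟨w, hw1, hw2, hw3, hw4⟩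
        refine ⟨u + w, hu1.add hw1, hu2.add hw2, fun x => ?_, ?_⟩
        · have := (hu3 x).add (hw3 x)
          simpa [Finset.sum_add_distrib, add_div] using this
        · exact (Lp.coeFn_add a b).trans (hu4.add hw4)
      zero_mem' := ⟨0, measurable_zero, MemLp.zero, fun x => by simp, Lp.coeFn_zero _ _ _⟩
      smul_mem' := by
        rintro c a ⟨u, hu1, hu2, hu3, hu4⟩
        refine ⟨c • u, hu1.const_smul c, hu2.const_smul c, fun x => ?_, ?_⟩
        · have := (hu3 x).const_mul c
          simpa [Finset.mul_sum, mul_div_assoc, Finset.sum_div] using this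
        · exact (Lp.coeFn_smul c a).trans (hu4.const_smul c) }
  have hmemV : ∀ v, v ∈ V ↔ ∃ u : X → ℝ, Measurable u ∧ MemLp u 2 μ ∧
        (∀ x, Tendsto (fun n => (∑ h ∈ F n, u (h • x)) / (F n).card) atTop (𝓝 0)) ∧
        v =ᵐ[μ] u := fun v => Iff.rfl
  have hcl : hψ.toLp ψ ∈ V.topologicalClosure := by
    rw [← Submodule.orthogonal_orthogonal_eq_closure, Submodule.mem_orthogonal]
    intro f hf
    rw [Submodule.mem_orthogonal] at hf
    -- `f` is invariant
    have hfi : Integrable f μ := (Lp.memLp f).integrable (by norm_num)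
    obtain ⟨f', hf'm, hff'⟩ : ∃ f' : X → ℝ, Measurable f' ∧ f =ᵐ[μ] f' :=
      (Lp.aestronglyMeasurable f).aemeasurable
    have hf'i : Integrable f' μ := hfi.congr hff'
    have hinv : ∀ g : G, ∀ᵐ x ∂μ, f' (g • x) = f' x := by
      intro g
      have hgi : Integrable (fun x => f' (g • x)) μ :=
        (measurePreserving_smul g μ).integrable_comp_of_integrable hf'i
      refine Integrable.ae_eq_of_forall_setIntegral_eq _ _ hgi hf'i ?_
      intro A hA _
      set u : X → ℝ := fun x => A.indicator (fun _ => (1:ℝ)) x -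
        A.indicator (fun _ => (1:ℝ)) (g⁻¹ • x) with hu
      have hi1 : Measurable (A.indicator (fun _ => (1:ℝ))) := measurable_const.indicator hA
      have hum : Measurable u := hi1.sub (hi1.comp (measurable_const_smul g⁻¹))
      have hu2 : MemLp u 2 μ := by
        refine MemLp.of_bound hum.aestronglyMeasurable 2 (Eventually.of_forall fun x => ?_)
        have ha : ∀ y, 0 ≤ A.indicator (fun _ => (1:ℝ)) y ∧
            A.indicator (fun _ => (1:ℝ)) y ≤ 1 := fun y => by
          by_cases hy : y ∈ A <;> simp [hy]
        have h1 := ha x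
        have h2 := ha (g⁻¹ • x)
        rw [Real.norm_eq_abs, abs_le]
        constructor <;> simp only [hu] <;> linarith
      have hV : hu2.toLp u ∈ V := (hmemV _).2
        ⟨u, hum, hu2, fun x => bk_cobound F hFol A g⁻¹ x, hu2.coeFn_toLp⟩
      have horth := hf _ hV
      rw [L2.inner_def] at horth
      have horth' : ∫ x, u x * f' x ∂μ = 0 := by
        rw [← horth]
        refine integral_congr_ae ?_
        filter_upwards [hff', hu2.coeFn_toLp] with x h1 h2
        rw [h1, h2]
        simp [mul_comm]
      have hs1 : ∫ x in A, f' x ∂μ = ∫ x, A.indicator (fun _ => (1:ℝ)) x * f' x ∂μ := by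
        rw [← integral_indicator hA]
        refine integral_congr_ae (Eventually.of_forall fun x => ?_)
        by_cases hx : x ∈ A <;> simp [hx]
      have hs2 : ∫ x in A, f' (g • x) ∂μ =
          ∫ x, A.indicator (fun _ => (1:ℝ)) (g⁻¹ • x) * f' x ∂μ := by
        rw [← integral_smul_eq_self (μ := μ) (g := g)
          (fun x => A.indicator (fun _ => (1:ℝ)) (g⁻¹ • x) * f' x)]
        rw [← integral_indicator hA]
        refine integral_congr_ae (Eventually.of_forall fun x => ?_)
        by_cases hx : x ∈ A <;> simp [hx]
      have hb : ∀ (k : G), Integrable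
          (fun x => A.indicator (fun _ => (1:ℝ)) (k • x) * f' x) μ := by
        intro k
        refine hf'i.bdd_mul (c := 1) (hi1.comp (measurable_const_smul k)).aestronglyMeasurable
          (Eventually.of_forall fun x => ?_)
        by_cases hx : k • x ∈ A <;> simp [hx]
      rw [hs1, hs2]
      have hb1 := hb 1
      simp only [one_smul] at hb1
      have : ∫ x, u x * f' x ∂μ = ∫ x, A.indicator (fun _ => (1:ℝ)) x * f' x ∂μ -
          ∫ x, A.indicator (fun _ => (1:ℝ)) (g⁻¹ • x) * f' x ∂μ := by
        rw [← integral_sub hb1 (hb g⁻¹)]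
        simp only [hu, sub_mul]
      linarith
    obtain ⟨c, hc⟩ := bk_const μ herg f' hf'm hinv
    rw [L2.inner_def]
    have : ∫ x, c * ψ x ∂μ = 0 := by rw [integral_const_mul, h0, mul_zero]
    rw [← this]
    refine integral_congr_ae ?_
    filter_upwards [hff', hc, hψ.coeFn_toLp] with x h1 h2 h3
    rw [h1, h2, h3]
    simp [mul_comm]
  have hcl' : hψ.toLp ψ ∈ closure (V : Set (Lp ℝ 2 μ)) := hcl
  obtain ⟨v, hv, hvd⟩ := Metric.mem_closure_iff.1 hcl' ρ hρ
  obtain ⟨u, hu1, hu2, hu3, hu4⟩ := (hmemV v).1 hv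
  refine ⟨u, hu1, hu2.integrable (by norm_num), hu3, ?_⟩
  rw [dist_eq_norm, Lp.norm_def] at hvd
  have he : eLpNorm (⇑(hψ.toLp ψ - v)) 2 μ = eLpNorm (fun x => ψ x - u x) 2 μ := by
    refine eLpNorm_congr_ae ?_
    filter_upwards [Lp.coeFn_sub (hψ.toLp ψ) v, hψ.coeFn_toLp, hu4] with x h1 h2 h3
    rw [h1, Pi.sub_apply, h2, h3]
  rw [he] at hvd
  have hm : MemLp (fun x => ψ x - u x) 2 μ := hψ.sub hu2
  have h12 : eLpNorm (fun x => ψ x - u x) 1 μ ≤ eLpNorm (fun x => ψ x - u x) 2 μ :=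
    eLpNorm_le_eLpNorm_of_exponent_le (by norm_num) hm.1
  have h3 : ∫ x, |ψ x - u x| ∂μ = (eLpNorm (fun x => ψ x - u x) 1 μ).toReal := by
    rw [eLpNorm_one_eq_lintegral_enorm, ← integral_norm_eq_lintegral_enorm hm.1]
    rfl
  rw [h3]
  exact (ENNReal.toReal_mono hm.2.ne h12).trans hvd.le

/-- Pointwise ergodic theorem (upper bound) along tempered Følner sequences. -/
theorem bk_ergodic [Group G] [Countable G] [MetricSpace X] [MulAction G X] [MeasurableSpace X]
    [MeasurableConstSMul G X]
    (μ : Measure X) [IsProbabilityMeasure μ] [SMulInvariantMeasure G X μ]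
    (herg : IsErgodicGAction G μ) (F : ℕ → Finset G) (hFol : IsFolnerSeq F)
    (hTemp : IsTemperedSeq F)
    (hcard : Tendsto (fun n => (F n).card) atTop atTop)
    (ψ : X → ℝ) (hψm : Measurable ψ) (hψ : MemLp ψ 2 μ) (ε : ℝ) (hε : 0 < ε) :
    ∀ᵐ x ∂μ, ∀ᶠ n in atTop, ∑ h ∈ F n, ψ (h • x) ≤ (F n).card * (∫ y, ψ y ∂μ + ε) := by
  obtain ⟨C, hC, hT⟩ := hTemp
  have hψi : Integrable ψ μ := hψ.integrable (by norm_num)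
  set I := ∫ y, ψ y ∂μ with hI
  set Bad := {x | ¬ ∀ᶠ n in atTop, ∑ h ∈ F n, ψ (h • x) ≤ (F n).card * (I + ε)} with hBad
  have key : ∀ ρ : ℝ, 0 < ρ → ε / 2 * μ.real Bad ≤ 2 * (2 * C + 2) * ρ := by
    intro ρ hρ
    obtain ⟨u, hu1, hui, hu2, hu3⟩ := bk_approx μ herg F hFol (fun x => ψ x - I)
      (hψm.sub measurable_const) (hψ.sub (memLp_const I))
      (by rw [integral_sub hψi (integrable_const I)]; simp [hI]) ρ hρ
    have hri : Integrable (fun x => |ψ x - I - u x|) μ :=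
      ((hψi.sub (integrable_const I)).sub hui).abs
    have hmax := bk_max' μ F hFol C hC hT hcard (fun x => |ψ x - I - u x|)
      (measurable_abs.comp ((hψm.sub measurable_const).sub hu1)) (fun x => abs_nonneg _)
      hri (ε / 2) (by positivity)
    have hsub : Bad ⊆ {x | ∃ k, ε / 2 * (F k).card <
        ∑ h ∈ F k, |ψ (h • x) - I - u (h • x)|} := by
      intro x hx
      have hx' : ∃ᶠ n in atTop, ¬ ∑ h ∈ F n, ψ (h • x) ≤ (F n).card * (I + ε) := by
        rw [hBad, Set.mem_ofPred_eq] at hx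
        exact Filter.not_eventually.1 hx
      have h1 := (hu2 x).eventually (gt_mem_nhds (show (0:ℝ) < ε / 2 by positivity))
      obtain ⟨n, hn, hn1, hn2⟩ :=
        (hx'.and_eventually (h1.and (hcard.eventually_ge_atTop 1))).exists
      refine ⟨n, ?_⟩
      push Not at hn
      have hpos : (0:ℝ) < (F n).card := by exact_mod_cast hn2
      rw [div_lt_iff₀ hpos] at hn1
      have h2 : ∑ h ∈ F n, (ψ (h • x) - I - u (h • x)) ≤
          ∑ h ∈ F n, |ψ (h • x) - I - u (h • x)| :=
        Finset.sum_le_sum fun h _ => le_abs_self _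
      rw [Finset.sum_sub_distrib, Finset.sum_sub_distrib, Finset.sum_const, nsmul_eq_mul] at h2
      nlinarith
    calc ε / 2 * μ.real Bad ≤ ε / 2 * μ.real {x | ∃ k, ε / 2 * (F k).card <
        ∑ h ∈ F k, |ψ (h • x) - I - u (h • x)|} := by
          exact mul_le_mul_of_nonneg_left (measureReal_mono (μ := μ) hsub (measure_ne_top μ _))
            (by positivity)
      _ ≤ _ := hmax
      _ ≤ _ := by gcongr
  have hz : μ.real Bad = 0 := by
    by_contra hne
    have hp : 0 < μ.real Bad := lt_of_le_of_ne measureReal_nonneg (Ne.symm hne)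
    have := key (ε / 2 * μ.real Bad / (4 * (2 * C + 2))) (by positivity)
    have h2 : 2 * (2 * C + 2) * (ε / 2 * μ.real Bad / (4 * (2 * C + 2))) =
        ε / 2 * μ.real Bad / 2 := by field_simp; ring
    rw [h2] at this
    have : 0 < ε / 2 * μ.real Bad := by positivity
    linarith
  rw [ae_iff]
  exact (measureReal_eq_zero_iff (measure_ne_top _ _)).1 hz

end HelpersC
section HelpersD

open Classical Finset

/-- Recursive form of the average of `c` over the past of a point in a random order. -/
noncomputable def bkE' (c : Finset G → ℝ) : ℕ → Finset G → ℝ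
  | 0, B => c B
  | n + 1, B => (c B + ∑ g ∈ B, bkE' c n (B.erase g)) / (n + 2)

/-- The average of `c` over the past of a point in a random order. -/
noncomputable def bkE (c : Finset G → ℝ) (B : Finset G) : ℝ := bkE' c B.card B

theorem bkE_rec (c : Finset G → ℝ) (B : Finset G) :
    ((B.card : ℝ) + 1) * bkE c B = c B + ∑ g ∈ B, bkE c (B.erase g) := by
  have hs : ∀ g ∈ B, bkE c (B.erase g) = bkE' c (B.card - 1) (B.erase g) := by
    intro g hg
    rw [bkE, Finset.card_erase_of_mem hg]
  rw [Finset.sum_congr rfl hs]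
  rcases h : B.card with _ | n
  · have : B = ∅ := Finset.card_eq_zero.1 h
    subst this
    simp [bkE, bkE']
  · rw [bkE, h, bkE']
    push_cast
    have : (n : ℝ) + 2 ≠ 0 := by positivity
    field_simp
    ring

theorem bkE_eq (c : Finset G → ℝ) (B : Finset G) :
    bkE c B = (c B + ∑ g ∈ B, bkE c (B.erase g)) / ((B.card : ℝ) + 1) := by
  rw [← bkE_rec, mul_div_cancel_left₀]
  positivity

theorem bkE_marg (c : Finset G → ℝ) (K : Finset G) (hc : ∀ A, c A = c (A ∩ K)) :
    ∀ B, bkE c B = bkE c (B ∩ K) := by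
  intro B
  induction B using Finset.strongInduction with
  | H B ih =>
    have h1 := bkE_rec c B
    have h2 := bkE_rec c (B ∩ K)
    have h3 : ∑ g ∈ B, bkE c (B.erase g) =
        ∑ g ∈ B ∩ K, bkE c ((B ∩ K).erase g) + ((B \ K).card : ℝ) * bkE c (B ∩ K) := by
      rw [← Finset.sum_inter_add_sum_sdiff B K, ← nsmul_eq_mul, ← Finset.sum_const]
      congr 1
      · refine Finset.sum_congr rfl fun g hg => ?_
        rw [ih _ (Finset.erase_ssubset (Finset.mem_inter.1 hg).1), Finset.erase_inter]
      · refine Finset.sum_congr rfl fun g hg => ?_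
        rw [ih _ (Finset.erase_ssubset (Finset.mem_sdiff.1 hg).1), Finset.erase_inter,
          Finset.erase_eq_of_notMem]
        intro h
        exact (Finset.mem_sdiff.1 hg).2 (Finset.mem_inter.1 h).2
    have h4 : (B.card : ℝ) = (B ∩ K).card + (B \ K).card := by
      exact_mod_cast (Finset.card_inter_add_card_sdiff B K).symm
    have h7 := hc B
    rw [h3] at h1
    have h5 : ((B.card : ℝ) + 1) * bkE c B = ((B.card : ℝ) + 1) * bkE c (B ∩ K) := by
      rw [h1, h4]; linear_combination h7 - h2
    have h6 : ((B.card : ℝ) + 1) ≠ 0 := (Nat.cast_add_one_pos _).ne'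
    exact mul_left_cancel₀ h6 h5

theorem bkE_congr (c c' : Finset G → ℝ) (B : Finset G) (h : ∀ A ⊆ B, c A = c' A) :
    bkE c B = bkE c' B := by
  induction B using Finset.strongInduction with
  | H B ih =>
    rw [bkE_eq, bkE_eq c', h B (Finset.Subset.refl B)]
    congr 2
    refine Finset.sum_congr rfl fun g hg => ?_
    exact ih _ (Finset.erase_ssubset hg) fun A hA => h A (hA.trans (Finset.erase_subset _ _))

theorem bkE_le (c : Finset G → ℝ) (M : ℝ) (B : Finset G) (h : ∀ A ⊆ B, c A ≤ M) :
    bkE c B ≤ M := by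
  induction B using Finset.strongInduction with
  | H B ih =>
    rw [bkE_eq, div_le_iff₀ (by positivity)]
    have h1 : ∑ g ∈ B, bkE c (B.erase g) ≤ ∑ g ∈ B, M :=
      Finset.sum_le_sum fun g hg =>
        ih _ (Finset.erase_ssubset hg) fun A hA => h A (hA.trans (Finset.erase_subset _ _))
    rw [Finset.sum_const, nsmul_eq_mul] at h1
    have := h B (Finset.Subset.refl B)
    linarith

theorem bkE_nonneg (c : Finset G → ℝ) (B : Finset G) (h : ∀ A ⊆ B, 0 ≤ c A) :
    0 ≤ bkE c B := by
  induction B using Finset.strongInduction with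
  | H B ih =>
    rw [bkE_eq]
    have h1 : 0 ≤ ∑ g ∈ B, bkE c (B.erase g) :=
      Finset.sum_nonneg fun g hg =>
        ih _ (Finset.erase_ssubset hg) fun A hA => h A (hA.trans (Finset.erase_subset _ _))
    have := h B (Finset.Subset.refl B)
    positivity

theorem bkE_image [Group G] (c : Finset G → ℝ) (a : G) (B : Finset G) :
    bkE c (B.image (· * a)) = bkE (fun A => c (A.image (· * a))) B := by
  have hinj : Function.Injective (fun h : G => h * a) := fun x y h => mul_right_cancel h
  induction B using Finset.strongInduction with
  | H B ih =>
    rw [bkE_eq, bkE_eq _ B, Finset.card_image_of_injective _ hinj,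
      Finset.sum_image (by intro x _ y _ h; exact hinj h)]
    congr 2
    refine Finset.sum_congr rfl fun g hg => ?_
    rw [← ih _ (Finset.erase_ssubset hg), Finset.image_erase hinj]

theorem bkE_measurable [MeasurableSpace X] (c : Finset G → X → ℝ) (hc : ∀ A, Measurable (c A))
    (B : Finset G) : Measurable (fun x => bkE (fun A => c A x) B) := by
  induction B using Finset.strongInduction with
  | H B ih =>
    have : (fun x => bkE (fun A => c A x) B) =
        fun x => (c B x + ∑ g ∈ B, bkE (fun A => c A x) (B.erase g)) / ((B.card : ℝ) + 1) := by
      funext x; exact bkE_eq _ _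
    rw [this]
    refine ((hc B).add (Finset.measurable_sum _ fun g hg => ?_)).div_const _
    exact ih _ (Finset.erase_ssubset hg)

/-- The total over `S`. -/
noncomputable def bkU (c : G → Finset G → ℝ) (S : Finset G) : ℝ :=
  ∑ g ∈ S, bkE (c g) (S.erase g)

theorem bkU_rec (c : G → Finset G → ℝ) (S : Finset G) :
    (S.card : ℝ) * bkU c S = ∑ g ∈ S, (c g (S.erase g) + bkU c (S.erase g)) := by
  rw [Finset.sum_add_distrib]
  unfold bkU
  have hsw : ∑ g ∈ S, ∑ h ∈ S.erase g, bkE (c h) ((S.erase g).erase h) =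
      ∑ h ∈ S, ∑ g ∈ S.erase h, bkE (c h) ((S.erase h).erase g) := by
    rw [Finset.sum_comm' (t' := S) (s' := fun h => S.erase h)]
    · refine Finset.sum_congr rfl fun h _ => Finset.sum_congr rfl fun g _ => ?_
      rw [Finset.erase_right_comm]
    · intro x y
      simp only [Finset.mem_erase]
      tauto
  rw [hsw, ← Finset.sum_add_distrib, Finset.mul_sum]
  refine Finset.sum_congr rfl fun h hh => ?_
  rw [← bkE_rec, Finset.card_erase_of_mem hh]
  have : 1 ≤ S.card := Finset.card_pos.2 ⟨h, hh⟩
  push_cast [this]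
  ring

theorem bkU_tele (c : G → Finset G → ℝ) (L : Finset G → ℝ) (h0 : L ∅ = 0)
    (S : Finset G) (hL : ∀ g, ∀ A, A ⊆ S → g ∈ S → g ∉ A → c g A = L (insert g A) - L A) :
    bkU c S = L S := by
  induction S using Finset.strongInduction with
  | H S ih =>
    by_cases hS : S = ∅
    · subst hS; simp [bkU, h0]
    · have h1 := bkU_rec c S
      have h2 : ∀ g ∈ S, c g (S.erase g) + bkU c (S.erase g) = L S := by
        intro g hg
        rw [ih _ (Finset.erase_ssubset hg) (fun g' A hA hg' hgA =>
            hL g' A (hA.trans (Finset.erase_subset _ _)) (Finset.mem_of_mem_erase hg') hgA),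
          hL g _ (Finset.erase_subset _ _) hg (Finset.notMem_erase g S), Finset.insert_erase hg]
        ring
      rw [Finset.sum_congr rfl h2, Finset.sum_const, nsmul_eq_mul] at h1
      have : (S.card : ℝ) ≠ 0 := by
        rw [Nat.cast_ne_zero]
        exact Finset.card_ne_zero.2 (Finset.nonempty_iff_ne_empty.2 hS)
      exact mul_left_cancel₀ this h1

/-- Sub-probability bound obtained from convexity of the exponential. -/
theorem bk_words {k : ℕ} (c : (G → Fin k) → G → Finset G → ℝ) (D : ℝ) (hD : 0 ≤ D)
    (hloc : ∀ w w' g A, (∀ h ∈ insert g A, w h = w' h) → c w g A = c w' g A)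
    (hsum : ∀ w g A, g ∉ A → ∑ i : Fin k, Real.exp (-c (Function.update w g i) g A) ≤ D)
    (F : Finset G) (W : Finset (G → Fin k))
    (hW : ∀ w ∈ W, ∀ g ∈ F, ∀ i, Function.update w g i ∈ W) :
    ∀ S ⊆ F, (k : ℝ) ^ S.card * ∑ w ∈ W, Real.exp (-bkU (c w) S) ≤ D ^ S.card * W.card := by
  have hUloc : ∀ (S : Finset G) (w w' : G → Fin k), (∀ h ∈ S, w h = w' h) →
      bkU (c w) S = bkU (c w') S := by
    intro S w w' h
    unfold bkU
    refine Finset.sum_congr rfl fun g hg => ?_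
    refine bkE_congr _ _ _ fun A hA => hloc _ _ _ _ fun x hx => h x ?_
    rcases Finset.mem_insert.1 hx with rfl | hx
    · exact hg
    · exact Finset.mem_of_mem_erase (hA hx)
  -- averaging over one coordinate
  have hsw : ∀ g ∈ F, ∀ Φ : (G → Fin k) → ℝ,
      (k : ℝ) * ∑ w ∈ W, Φ w = ∑ w ∈ W, ∑ i : Fin k, Φ (Function.update w g i) := by
    intro g hg Φ
    have h1 : (k : ℝ) * ∑ w ∈ W, Φ w = ∑ p ∈ W ×ˢ (Finset.univ : Finset (Fin k)), Φ p.1 := by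
      rw [Finset.sum_product, Finset.mul_sum]
      simp
    rw [h1, ← Finset.sum_product']
    refine Finset.sum_nbij' (fun p => (Function.update p.1 g p.2, p.1 g))
      (fun p => (Function.update p.1 g p.2, p.1 g)) ?_ ?_ ?_ ?_ ?_
    · intro p hp
      simp only [Finset.mem_product, Finset.mem_univ, and_true] at hp ⊢
      exact hW _ hp g hg _
    · intro p hp
      simp only [Finset.mem_product, Finset.mem_univ, and_true] at hp ⊢
      exact hW _ hp g hg _
    · intro p _; simp
    · intro p _; simp
    · intro p _; simp
  intro S
  induction S using Finset.strongInduction with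
  | H S ih =>
    intro hSF
    by_cases hS : S = ∅
    · subst hS; simp [bkU]
    have hne : S.Nonempty := Finset.nonempty_iff_ne_empty.2 hS
    have hcpos : (0:ℝ) < S.card := by exact_mod_cast hne.card_pos
    have hconv : ∀ w, Real.exp (-bkU (c w) S) ≤
        ∑ g ∈ S, (S.card : ℝ)⁻¹ * Real.exp (-(c w g (S.erase g) + bkU (c w) (S.erase g))) := by
      intro w
      have h1 := convexOn_exp.map_sum_le (t := S) (w := fun _ => (S.card : ℝ)⁻¹)
        (p := fun g => -(c w g (S.erase g) + bkU (c w) (S.erase g)))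
        (fun _ _ => by positivity) (by simp [hcpos.ne']) (fun _ _ => Set.mem_univ _)
      have h2 : ∑ g ∈ S, (S.card : ℝ)⁻¹ • (-(c w g (S.erase g) + bkU (c w) (S.erase g))) =
          -bkU (c w) S := by
        simp only [smul_eq_mul]
        rw [← Finset.mul_sum, Finset.sum_neg_distrib, ← bkU_rec]
        field_simp
      rw [h2] at h1
      simpa using h1
    have hg : ∀ g ∈ S, (k : ℝ) ^ S.card *
        ∑ w ∈ W, Real.exp (-(c w g (S.erase g) + bkU (c w) (S.erase g))) ≤
        D ^ S.card * W.card := by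
      intro g hg
      have hcard : S.card = (S.erase g).card + 1 := (Finset.card_erase_add_one hg).symm
      have h1 := hsw g (hSF hg)
        (fun w => Real.exp (-(c w g (S.erase g) + bkU (c w) (S.erase g))))
      have h2 : ∑ w ∈ W, ∑ i : Fin k, Real.exp (-(c (Function.update w g i) g (S.erase g) +
          bkU (c (Function.update w g i)) (S.erase g))) ≤
          ∑ w ∈ W, D * Real.exp (-bkU (c w) (S.erase g)) := by
        refine Finset.sum_le_sum fun w _ => ?_
        have h3 : ∀ i, bkU (c (Function.update w g i)) (S.erase g) = bkU (c w) (S.erase g) := by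
          intro i
          refine hUloc _ _ _ fun h hh => ?_
          rw [Function.update_of_ne (Finset.ne_of_mem_erase hh)]
        simp_rw [h3, neg_add, Real.exp_add]
        rw [← Finset.sum_mul]
        exact mul_le_mul_of_nonneg_right (hsum w g _ (Finset.notMem_erase g S))
          (Real.exp_pos _).le
      rw [← Finset.mul_sum] at h2
      have h4 := ih _ (Finset.erase_ssubset hg) ((Finset.erase_subset _ _).trans hSF)
      rw [hcard, pow_succ, pow_succ, mul_assoc, h1]
      calc (k : ℝ) ^ (S.erase g).card * ∑ w ∈ W, ∑ i : Fin k,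
            Real.exp (-(c (Function.update w g i) g (S.erase g) +
            bkU (c (Function.update w g i)) (S.erase g)))
          ≤ (k : ℝ) ^ (S.erase g).card * (D * ∑ w ∈ W, Real.exp (-bkU (c w) (S.erase g))) := by
            gcongr
        _ = D * ((k : ℝ) ^ (S.erase g).card * ∑ w ∈ W, Real.exp (-bkU (c w) (S.erase g))) := by
            ring
        _ ≤ D * (D ^ (S.erase g).card * W.card) := by gcongr
        _ = _ := by ring
    calc (k : ℝ) ^ S.card * ∑ w ∈ W, Real.exp (-bkU (c w) S)
        ≤ (k : ℝ) ^ S.card * ∑ w ∈ W, ∑ g ∈ S, (S.card : ℝ)⁻¹ *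
          Real.exp (-(c w g (S.erase g) + bkU (c w) (S.erase g))) := by
          gcongr with w _
          exact hconv w
      _ = (S.card : ℝ)⁻¹ * ∑ g ∈ S, (k : ℝ) ^ S.card *
          ∑ w ∈ W, Real.exp (-(c w g (S.erase g) + bkU (c w) (S.erase g))) := by
          rw [Finset.sum_comm, ← Finset.mul_sum]
          simp_rw [← Finset.mul_sum]
          ring
      _ ≤ (S.card : ℝ)⁻¹ * ∑ g ∈ S, D ^ S.card * W.card := by
          exact mul_le_mul_of_nonneg_left (Finset.sum_le_sum fun g hgS => hg g hgS) (by positivity)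
      _ = D ^ S.card * W.card := by
          rw [Finset.sum_const, nsmul_eq_mul]
          field_simp

end HelpersD
section HelpersE

open Classical Finset

variable [Group G] [MulAction G X]

/-- The cylinder prescribed by the word `w` on `A`. -/
def bkCyl {k : ℕ} (p : X → Fin k) (A : Finset G) (w : G → Fin k) : Set X :=
  {y | ∀ h ∈ A, p (h • y) = w h}

/-- The word of a point. -/
def bkw (G : Type*) [Group G] [MulAction G X] {k : ℕ} (p : X → Fin k) (x : X) : G → Fin k :=
  fun h => p (h • x)

/-- Extension of a word on `A` by a fixed word. -/
noncomputable def bkExt {k : ℕ} (w0 : G → Fin k) (A : Finset G) (u : ↥A → Fin k) : G → Fin k :=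
  fun h => if hh : h ∈ A then u ⟨h, hh⟩ else w0 h

theorem bkExt_restrict {k : ℕ} (w0 : G → Fin k) (A : Finset G) (w : G → Fin k) :
    ∀ h ∈ A, bkExt w0 A (fun a => w a) h = w h := by
  intro h hh
  simp [bkExt, hh]

variable [MeasurableSpace X]

/-- The measure of the cylinder. -/
noncomputable def bkM {k : ℕ} (μ : Measure X) (p : X → Fin k) (A : Finset G) (w : G → Fin k) : ℝ :=
  μ.real (bkCyl p A w)

/-- The information of the symbol at `g` given the symbols on `B`. -/
noncomputable def bkc {k : ℕ} (μ : Measure X) (p : X → Fin k) (R : ℝ) (g : G) (B : Finset G)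
    (w : G → Fin k) : ℝ :=
  if bkM μ p (insert g B) w = 0 then R
  else Real.log (bkM μ p B w) - Real.log (bkM μ p (insert g B) w)

theorem bkCyl_congr {k : ℕ} (p : X → Fin k) (A : Finset G) (w w' : G → Fin k)
    (h : ∀ a ∈ A, w a = w' a) : bkCyl p A w = bkCyl p A w' := by
  ext y
  simp only [bkCyl, Set.mem_ofPred_eq]
  refine forall₂_congr fun a ha => ?_
  rw [h a ha]

theorem bkM_congr {k : ℕ} (μ : Measure X) (p : X → Fin k) (A : Finset G) (w w' : G → Fin k)
    (h : ∀ a ∈ A, w a = w' a) : bkM μ p A w = bkM μ p A w' := by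
  unfold bkM
  rw [bkCyl_congr p A w w' h]

theorem bkc_congr {k : ℕ} (μ : Measure X) (p : X → Fin k) (R : ℝ) (g : G) (A : Finset G)
    (w w' : G → Fin k) (h : ∀ a ∈ insert g A, w a = w' a) : bkc μ p R g A w = bkc μ p R g A w' := by
  unfold bkc
  rw [bkM_congr μ p (insert g A) w w' h,
    bkM_congr μ p A w w' fun a ha => h a (Finset.mem_insert_of_mem ha)]

theorem bkM_empty {k : ℕ} (μ : Measure X) [IsProbabilityMeasure μ] (p : X → Fin k)
    (w : G → Fin k) : bkM μ p ∅ w = 1 := by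
  simp [bkM, bkCyl]

theorem bkM_insert_le {k : ℕ} (μ : Measure X) [IsProbabilityMeasure μ] (p : X → Fin k)
    (g : G) (B : Finset G) (w : G → Fin k) : bkM μ p (insert g B) w ≤ bkM μ p B w := by
  refine measureReal_mono ?_ (measure_ne_top μ _)
  intro y hy h hh
  exact hy h (Finset.mem_insert_of_mem hh)

theorem bkM_nonneg {k : ℕ} (μ : Measure X) (p : X → Fin k)
    (B : Finset G) (w : G → Fin k) : 0 ≤ bkM μ p B w := measureReal_nonneg

theorem bkc_nonneg {k : ℕ} (μ : Measure X) [IsProbabilityMeasure μ] (p : X → Fin k) (R : ℝ)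
    (hR : 0 ≤ R) (g : G) (B : Finset G) (w : G → Fin k) : 0 ≤ bkc μ p R g B w := by
  unfold bkc
  split_ifs with h
  · exact hR
  · have h1 : 0 < bkM μ p (insert g B) w := lt_of_le_of_ne (bkM_nonneg _ _ _ _) (Ne.symm h)
    have := Real.log_le_log h1 (bkM_insert_le μ p g B w)
    linarith

variable [MeasurableConstSMul G X]

theorem bkCyl_meas {k : ℕ} (p : X → Fin k) (hp : Measurable p) (A : Finset G) (w : G → Fin k) :
    MeasurableSet (bkCyl p A w) := by
  have : bkCyl p A w = ⋂ h ∈ A, (fun y => p (h • y)) ⁻¹' {w h} := by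
    ext y; simp [bkCyl]
  rw [this]
  exact Finset.measurableSet_biInter _ fun h _ =>
    (hp.comp (measurable_const_smul h)) (measurableSet_singleton _)

theorem bkM_sum {k : ℕ} (μ : Measure X) [IsProbabilityMeasure μ] (p : X → Fin k)
    (hp : Measurable p) (g : G) (B : Finset G) (w : G → Fin k) (hg : g ∉ B) :
    ∑ i : Fin k, bkM μ p (insert g B) (Function.update w g i) ≤ bkM μ p B w := by
  unfold bkM
  rw [← measureReal_biUnion_finset]
  · refine measureReal_mono ?_ (measure_ne_top μ _)
    intro y hy h hh
    simp only [Set.mem_iUnion] at hy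
    obtain ⟨i, _, hy⟩ := hy
    have := hy h (Finset.mem_insert_of_mem hh)
    rwa [Function.update_of_ne] at this
    rintro rfl
    exact hg hh
  · intro i _ j _ hij
    refine Set.disjoint_left.2 fun y hy hy' => hij ?_
    have h1 := hy g (Finset.mem_insert_self _ _)
    have h2 := hy' g (Finset.mem_insert_self _ _)
    rw [Function.update_self] at h1 h2
    exact h1.symm.trans h2
  · intro i _
    exact bkCyl_meas p hp _ _

theorem bkc_sum {k : ℕ} (μ : Measure X) [IsProbabilityMeasure μ] (p : X → Fin k)
    (hp : Measurable p) (R : ℝ) (g : G) (B : Finset G) (w : G → Fin k) (hg : g ∉ B) :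
    ∑ i : Fin k, Real.exp (-bkc μ p R g B (Function.update w g i)) ≤ 1 + k * Real.exp (-R) := by
  have hB : ∀ i, bkM μ p B (Function.update w g i) = bkM μ p B w := by
    intro i
    refine bkM_congr _ _ _ _ _ fun a ha => ?_
    rw [Function.update_of_ne]
    rintro rfl
    exact hg ha
  have h1 : ∀ i : Fin k, Real.exp (-bkc μ p R g B (Function.update w g i)) ≤
      bkM μ p (insert g B) (Function.update w g i) / bkM μ p B w + Real.exp (-R) := by
    intro i
    unfold bkc
    split_ifs with h
    · rw [h]; simp
    · have h1 : 0 < bkM μ p (insert g B) (Function.update w g i) :=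
        lt_of_le_of_ne (bkM_nonneg _ _ _ _) (Ne.symm h)
      have h2 : 0 < bkM μ p B w := by
        rw [← hB i]
        exact h1.trans_le (bkM_insert_le μ p g B _)
      rw [hB i, neg_sub, Real.exp_sub, Real.exp_log h1, Real.exp_log h2]
      have := Real.exp_pos (-R)
      linarith
  refine (Finset.sum_le_sum fun i _ => h1 i).trans ?_
  rw [Finset.sum_add_distrib, ← Finset.sum_div]
  simp only [Finset.sum_const, Finset.card_univ, Fintype.card_fin, nsmul_eq_mul]
  gcongr
  exact div_le_one_of_le₀ (bkM_sum μ p hp g B w hg) (bkM_nonneg _ _ _ _)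

theorem bkM_image {k : ℕ} (μ : Measure X) [SMulInvariantMeasure G X μ] (p : X → Fin k)
    (hp : Measurable p) (g : G) (B : Finset G) (x : X) :
    bkM μ p (B.image (· * g)) (bkw G p x) = bkM μ p B (bkw G p (g • x)) := by
  have : bkCyl p (B.image (· * g)) (bkw G p x) =
      (fun y => g • y) ⁻¹' bkCyl p B (bkw G p (g • x)) := by
    ext y
    simp only [bkCyl, bkw, Set.mem_ofPred_eq, Set.mem_preimage, Finset.forall_mem_image, mul_smul]
  unfold bkM
  rw [this, measureReal_def, measureReal_def, measure_preimage_smul]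

theorem bkc_image {k : ℕ} (μ : Measure X) [SMulInvariantMeasure G X μ] (p : X → Fin k)
    (hp : Measurable p) (R : ℝ) (g : G) (B : Finset G) (x : X) :
    bkc μ p R g (B.image (· * g)) (bkw G p x) = bkc μ p R 1 B (bkw G p (g • x)) := by
  have : insert g (B.image (· * g)) = (insert 1 B).image (· * g) := by
    rw [Finset.image_insert, one_mul]
  unfold bkc
  rw [this, bkM_image μ p hp, bkM_image μ p hp]

theorem bk_local_meas {k : ℕ} (p : X → Fin k) (hp : Measurable p) (A : Finset G)
    (Φ : (G → Fin k) → ℝ) (hΦ : ∀ w w', (∀ a ∈ A, w a = w' a) → Φ w = Φ w') :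
    Measurable (fun x => Φ (bkw G p x)) := by
  rcases isEmpty_or_nonempty X with h | ⟨⟨x0⟩⟩
  · exact measurable_of_empty _
  have : (fun x => Φ (bkw G p x)) =
      (fun u : ↥A → Fin k => Φ (bkExt (bkw G p x0) A u)) ∘ (fun x a => p ((a : G) • x)) := by
    funext x
    exact hΦ _ _ fun a ha => (bkExt_restrict _ A (bkw G p x) a ha).symm
  rw [this]
  refine (measurable_of_finite _).comp ?_
  exact measurable_pi_lambda _ fun a => hp.comp (measurable_const_smul (a : G))

theorem bk_local_bdd {k : ℕ} (A : Finset G)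
    (Φ : (G → Fin k) → ℝ) (hΦ : ∀ w w', (∀ a ∈ A, w a = w' a) → Φ w = Φ w') :
    ∃ M : ℝ, 0 ≤ M ∧ ∀ w, |Φ w| ≤ M := by
  rcases isEmpty_or_nonempty (G → Fin k) with h | ⟨⟨w0⟩⟩
  · exact ⟨0, le_rfl, fun w => (h.false w).elim⟩
  obtain ⟨M, hM⟩ := (Set.finite_range (fun u : ↥A → Fin k => |Φ (bkExt w0 A u)|)).bddAbove
  have h : ∀ w, |Φ w| ≤ M := by
    intro w
    rw [hΦ w (bkExt w0 A fun a => w a) fun a ha => (bkExt_restrict w0 A w a ha).symm]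
    exact hM ⟨_, rfl⟩
  exact ⟨M, (abs_nonneg _).trans (h w0), h⟩

theorem bk_local_integral {k : ℕ} (μ : Measure X) [IsProbabilityMeasure μ] (p : X → Fin k)
    (hp : Measurable p) (w0 : G → Fin k) (A : Finset G)
    (Φ : (G → Fin k) → ℝ) (hΦ : ∀ w w', (∀ a ∈ A, w a = w' a) → Φ w = Φ w') :
    ∫ x, Φ (bkw G p x) ∂μ = ∑ u : ↥A → Fin k, bkM μ p A (bkExt w0 A u) * Φ (bkExt w0 A u) := by
  have h1 : ∀ x, Φ (bkw G p x) = ∑ u : ↥A → Fin k,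
      (bkCyl p A (bkExt w0 A u)).indicator (fun _ => Φ (bkExt w0 A u)) x := by
    intro x
    rw [Finset.sum_eq_single (fun a : ↥A => bkw G p x (a : G))]
    · rw [Set.indicator_of_mem]
      · exact hΦ _ _ fun a ha => (bkExt_restrict _ A (bkw G p x) a ha).symm
      · intro h hh
        rw [bkExt_restrict w0 A _ h hh]
        rfl
    · intro u _ hu
      rw [Set.indicator_of_notMem]
      intro hx
      apply hu
      funext a
      have := hx a a.2
      simp only [bkExt, a.2, dite_true] at this
      exact this.symm
    · intro h; exact (h (Finset.mem_univ _)).elim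
  simp_rw [h1]
  rw [integral_finsetSum]
  · refine Finset.sum_congr rfl fun u _ => ?_
    rw [integral_indicator_const _ (bkCyl_meas p hp _ _), smul_eq_mul]
    rfl
  · intro u _
    exact (integrable_const _).indicator (bkCyl_meas p hp _ _)

theorem bkM_pos_ae {k : ℕ} [Countable G] (μ : Measure X) [IsProbabilityMeasure μ] (p : X → Fin k)
    (hp : Measurable p) : ∀ᵐ x ∂μ, ∀ A : Finset G, 0 < bkM μ p A (bkw G p x) := by
  rw [ae_all_iff]
  intro A
  have hX : Nonempty X := nonempty_of_isProbabilityMeasure μ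
  obtain ⟨x0⟩ := hX
  have : ∀ u : ↥A → Fin k, ∀ᵐ x ∂μ, x ∈ bkCyl p A (bkExt (bkw G p x0) A u) →
      0 < bkM μ p A (bkExt (bkw G p x0) A u) := by
    intro u
    by_cases h : 0 < bkM μ p A (bkExt (bkw G p x0) A u)
    · exact Filter.Eventually.of_forall fun x _ => h
    · have h2 : bkM μ p A (bkExt (bkw G p x0) A u) = 0 :=
        le_antisymm (not_lt.1 h) (bkM_nonneg _ _ _ _)
      have h3 : μ (bkCyl p A (bkExt (bkw G p x0) A u)) = 0 :=
        (measureReal_eq_zero_iff (measure_ne_top _ _)).1 h2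
      filter_upwards [measure_eq_zero_iff_ae_notMem.1 h3] with x hx hx'
      exact (hx hx').elim
  filter_upwards [ae_all_iff.2 this] with x hx
  have h1 := hx (fun a => bkw G p x a) (by
    intro h hh
    rw [bkExt_restrict _ A _ h hh]
    rfl)
  rwa [bkM_congr μ p A _ (bkw G p x) (bkExt_restrict _ A _)] at h1

end HelpersE
section HelpersE2
open Classical Finset
variable [Group G] [MetricSpace X] [MulAction G X] [MeasurableSpace X] [MeasurableConstSMul G X]

theorem bk_partH {k : ℕ} (μ : Measure X) [IsProbabilityMeasure μ] (p : X → Fin k)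
    (hp : Measurable p) (A : Finset G) :
    partH μ (fun i => p ⁻¹' {i}) A = ∫ x, -Real.log (bkM μ p A (bkw G p x)) ∂μ := by
  have hX : Nonempty X := nonempty_of_isProbabilityMeasure μ
  obtain ⟨x0⟩ := hX
  rw [bk_local_integral μ p hp (bkw G p x0) A (fun w => -Real.log (bkM μ p A w))
    (fun w w' h => by rw [bkM_congr μ p A w w' h])]
  unfold partH
  have : ∀ u : ↥A → Fin k, Real.negMulLog ((μ (⋂ g : ↥A, (fun y => (g : G) • y) ⁻¹'
      ((fun i => p ⁻¹' {i}) (u g)))).toReal) =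
      bkM μ p A (bkExt (bkw G p x0) A u) * -Real.log (bkM μ p A (bkExt (bkw G p x0) A u)) := by
    intro u
    have h1 : (⋂ g : ↥A, (fun y => (g : G) • y) ⁻¹' ((fun i => p ⁻¹' {i}) (u g))) =
        bkCyl p A (bkExt (bkw G p x0) A u) := by
      ext y
      simp only [Set.mem_iInter, Set.mem_preimage, Set.mem_singleton_iff, bkCyl, Set.mem_ofPred_eq,
        Subtype.forall]
      refine forall₂_congr fun a ha => ?_
      simp [bkExt, ha]
    rw [h1, Real.negMulLog]
    unfold bkM
    rw [measureReal_def]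
    ring
  simp_rw [← this]

theorem bk_partH_le {k : ℕ} (μ : Measure X) [IsProbabilityMeasure μ] (p : X → Fin k)
    (hp : Measurable p) (A : Finset G) :
    partH μ (fun i => p ⁻¹' {i}) A ≤ A.card * Real.log k := by
  have hX : Nonempty X := nonempty_of_isProbabilityMeasure μ
  obtain ⟨x0⟩ := hX
  have hk : 0 < k := (p x0).pos
  rw [bk_partH μ p hp]
  have h1 := bk_local_integral μ p hp (bkw G p x0) A (fun _ => 1) (fun _ _ _ => rfl)
  rw [bk_local_integral μ p hp (bkw G p x0) A (fun w => -Real.log (bkM μ p A w))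
    (fun w w' h => by rw [bkM_congr μ p A w w' h])]
  simp only [integral_const, probReal_univ, smul_eq_mul, mul_one] at h1
  set N : ℝ := (k : ℝ) ^ A.card with hN
  have hNpos : 0 < N := by positivity
  have h2 : ∀ q : ℝ, 0 ≤ q → q * -Real.log q ≤ q * Real.log N + 1 / N - q := by
    intro q hq
    rcases hq.eq_or_lt with rfl | hq
    · simp; positivity
    · have := Real.log_le_sub_one_of_pos (show 0 < 1 / (q * N) by positivity)
      rw [one_div, Real.log_inv, Real.log_mul hq.ne' hNpos.ne'] at this
      have h3 := mul_le_mul_of_nonneg_left this hq.le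
      have h4 : q * ((q * N)⁻¹ - 1) = 1 / N - q := by field_simp
      rw [h4] at h3
      linarith
  refine (Finset.sum_le_sum fun u _ => h2 _ (bkM_nonneg _ _ _ _)).trans ?_
  rw [Finset.sum_sub_distrib, Finset.sum_add_distrib, ← Finset.sum_mul, ← h1]
  simp only [Finset.sum_const, Finset.card_univ, Fintype.card_fun, Fintype.card_fin,
    Fintype.card_coe, nsmul_eq_mul]
  push_cast
  rw [← hN, mul_one_div_cancel hNpos.ne', hN, Real.log_pow]
  linarith

end HelpersE2
section HelpersF

open Classical Finset

variable [Group G] [MetricSpace X] [MulAction G X] [MeasurableSpace X]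

/-- The averaged information function as a function of the word. -/
noncomputable def bkPhi {k : ℕ} (μ : Measure X) (p : X → Fin k) (R : ℝ) (K : Finset G)
    (w : G → Fin k) : ℝ := bkE (fun B => bkc μ p R 1 B w) K

theorem bkPhi_congr {k : ℕ} (μ : Measure X) (p : X → Fin k) (R : ℝ) (K : Finset G)
    (w w' : G → Fin k) (h : ∀ a ∈ insert 1 K, w a = w' a) :
    bkPhi μ p R K w = bkPhi μ p R K w' := by
  refine bkE_congr _ _ _ fun A hA => bkc_congr _ _ _ _ _ _ _ fun a ha => h a ?_
  exact Finset.insert_subset_insert 1 hA ha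

variable [MeasurableConstSMul G X]

theorem bkPhi_smul {k : ℕ} (μ : Measure X) [SMulInvariantMeasure G X μ] (p : X → Fin k)
    (hp : Measurable p) (R : ℝ) (K : Finset G) (g : G) (x : X) :
    bkE (fun B => bkc μ p R g B (bkw G p x)) (K.image (· * g)) =
      bkPhi μ p R K (bkw G p (g • x)) := by
  rw [bkE_image]
  refine bkE_congr _ _ _ fun A _ => ?_
  exact bkc_image μ p hp R g A x

theorem bkPhi_integrable {k : ℕ} (μ : Measure X) [IsProbabilityMeasure μ] (p : X → Fin k)
    (hp : Measurable p) (R : ℝ) (K : Finset G) (q : ℝ≥0∞) :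
    MemLp (fun x => bkPhi μ p R K (bkw G p x)) q μ := by
  obtain ⟨M, _, hM⟩ := bk_local_bdd (insert 1 K) (bkPhi μ p R K) (bkPhi_congr μ p R K)
  refine MemLp.of_bound (bk_local_meas p hp _ _ (bkPhi_congr μ p R K)).aestronglyMeasurable M ?_
  exact Filter.Eventually.of_forall fun x => hM _

theorem bk_exists_K {k : ℕ} [Countable G] (μ : Measure X) [IsProbabilityMeasure μ]
    [SMulInvariantMeasure G X μ] (p : X → Fin k)
    (hp : Measurable p) (R : ℝ) (A : Finset G) (hA : A.Nonempty) :
    ∃ K : Finset G, 1 ∉ K ∧ ∫ x, bkPhi μ p R K (bkw G p x) ∂μ ≤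
      partH μ (fun i => p ⁻¹' {i}) A / A.card := by
  set Kf : G → Finset G := fun g => (A.erase g).image (· * g⁻¹) with hKf
  have hK1 : ∀ g, (Kf g).image (· * g) = A.erase g := by
    intro g
    rw [hKf]
    ext a
    simp [Finset.mem_image]
  have h1 : ∀ᵐ x ∂μ, -Real.log (bkM μ p A (bkw G p x)) =
      ∑ g ∈ A, bkPhi μ p R (Kf g) (bkw G p (g • x)) := by
    filter_upwards [bkM_pos_ae (G := G) μ p hp] with x hx
    rw [← bkU_tele (fun g B => bkc μ p R g B (bkw G p x))
      (fun B => -Real.log (bkM μ p B (bkw G p x))) (by simp [bkM_empty]) A]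
    · unfold bkU
      refine Finset.sum_congr rfl fun g _ => ?_
      rw [← bkPhi_smul μ p hp, hK1]
    · intro g B _ _ _
      unfold bkc
      rw [if_neg (hx _).ne']
      ring
  have h2 : partH μ (fun i => p ⁻¹' {i}) A = ∑ g ∈ A, ∫ x, bkPhi μ p R (Kf g) (bkw G p x) ∂μ := by
    rw [bk_partH μ p hp, integral_congr_ae h1, integral_finsetSum]
    · refine Finset.sum_congr rfl fun g _ => ?_
      exact integral_smul_eq_self (μ := μ) (g := g) (fun x => bkPhi μ p R (Kf g) (bkw G p x))
    · intro g _
      have := (bkPhi_integrable μ p hp R (Kf g) 1).comp_measurePreserving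
        (measurePreserving_smul g μ)
      exact memLp_one_iff_integrable.1 this
  have hc : (0:ℝ) < A.card := by exact_mod_cast hA.card_pos
  obtain ⟨g, hg, hle⟩ := Finset.exists_le_of_sum_le (s := A)
    (f := fun g => ∫ x, bkPhi μ p R (Kf g) (bkw G p x) ∂μ)
    (g := fun _ => partH μ (fun i => p ⁻¹' {i}) A / A.card) hA (by
      rw [← h2, Finset.sum_const, nsmul_eq_mul, mul_div_cancel₀ _ hc.ne'])
  refine ⟨Kf g, ?_, hle⟩
  rw [hKf]
  simp only [Finset.mem_image, not_exists, not_and]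
  intro h hh he
  exact (Finset.ne_of_mem_erase hh) (mul_inv_eq_one.1 he)

/-- The local information cost. -/
noncomputable def bkcc {k : ℕ} (μ : Measure X) (p : X → Fin k) (R : ℝ) (K : Finset G)
    (w : G → Fin k) (g : G) (A : Finset G) : ℝ := bkc μ p R g (A ∩ K.image (· * g)) w

theorem bk_barron {k : ℕ} (μ : Measure X) [IsProbabilityMeasure μ]
    (p : X → Fin k) (hp : Measurable p) (R : ℝ) (K : Finset G) (F : Finset G) (t : ℝ) :
    μ.real {x | bkM μ p F (bkw G p x) < Real.exp (-t) *
      Real.exp (-bkU (bkcc μ p R K (bkw G p x)) F)} ≤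
      Real.exp (-t) * (1 + k * Real.exp (-R)) ^ F.card := by
  have hX : Nonempty X := nonempty_of_isProbabilityMeasure μ
  obtain ⟨x0⟩ := hX
  have hk : 0 < k := (p x0).pos
  set w0 := bkw G p x0 with hw0
  have hloc : ∀ w w' g A, (∀ h ∈ insert g A, w h = w' h) →
      bkcc μ p R K w g A = bkcc μ p R K w' g A := by
    intro w w' g A h
    refine bkc_congr _ _ _ _ _ _ _ fun a ha => h a ?_
    exact Finset.insert_subset_insert g Finset.inter_subset_left ha
  have hUloc : ∀ w w' : G → Fin k, (∀ a ∈ F, w a = w' a) →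
      bkU (bkcc μ p R K w) F = bkU (bkcc μ p R K w') F := by
    intro w w' h
    unfold bkU
    refine Finset.sum_congr rfl fun g hg => ?_
    refine bkE_congr _ _ _ fun A hA => hloc _ _ _ _ fun x hx => h x ?_
    rcases Finset.mem_insert.1 hx with rfl | hx
    · exact hg
    · exact Finset.mem_of_mem_erase (hA hx)
  have hinj : Function.Injective (bkExt w0 F) := by
    intro u v huv
    funext a
    have := congrFun huv a
    simpa [bkExt, a.2] using this
  have hwords := bk_words (bkcc μ p R K) (1 + k * Real.exp (-R)) (by positivity) hloc
    (fun w g A hg => bkc_sum μ p hp R g _ w fun h => hg (Finset.mem_inter.1 h).1) F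
    (Finset.univ.image (bkExt w0 F)) (by
      intro w hw g hg i
      obtain ⟨u, _, rfl⟩ := Finset.mem_image.1 hw
      refine Finset.mem_image.2 ⟨fun a => Function.update (bkExt w0 F u) g i a,
        Finset.mem_univ _, ?_⟩
      funext h
      by_cases hh : h ∈ F
      · rw [bkExt_restrict w0 F _ h hh]
      · have hne : h ≠ g := by rintro rfl; exact hh hg
        rw [Function.update_of_ne hne]
        simp [bkExt, hh]) F (Finset.Subset.refl F)
  rw [Finset.sum_image (fun u _ v _ h => hinj h), Finset.card_image_of_injective _ hinj,
    Finset.card_univ, Fintype.card_fun, Fintype.card_fin, Fintype.card_coe] at hwords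
  push_cast at hwords
  rw [mul_comm (_ ^ F.card)] at hwords
  have hw2 := le_of_mul_le_mul_right (hwords) (show (0:ℝ) < (k:ℝ) ^ F.card by positivity)
  set Φ : (G → Fin k) → ℝ := fun w => if bkM μ p F w < Real.exp (-t) *
      Real.exp (-bkU (bkcc μ p R K w) F) then 1 else 0 with hΦdef
  have hΦ : ∀ w w', (∀ a ∈ F, w a = w' a) → Φ w = Φ w' := by
    intro w w' h
    rw [hΦdef]
    simp only
    rw [bkM_congr μ p F w w' h, hUloc w w' h]
  have hmeas := bk_local_meas p hp F Φ hΦ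
  have hset : {x | bkM μ p F (bkw G p x) < Real.exp (-t) *
      Real.exp (-bkU (bkcc μ p R K (bkw G p x)) F)} = (fun x => Φ (bkw G p x)) ⁻¹' {1} := by
    ext x
    simp only [hΦdef, Set.mem_ofPred_eq, Set.mem_preimage, Set.mem_singleton_iff]
    split_ifs with h <;> simp [h]
  have hint : μ.real {x | bkM μ p F (bkw G p x) < Real.exp (-t) *
      Real.exp (-bkU (bkcc μ p R K (bkw G p x)) F)} = ∫ x, Φ (bkw G p x) ∂μ := by
    rw [← integral_indicator_one (by rw [hset]; exact hmeas (measurableSet_singleton _))]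
    congr 1
  rw [hint, bk_local_integral μ p hp w0 F Φ hΦ]
  calc ∑ u : ↥F → Fin k, bkM μ p F (bkExt w0 F u) * Φ (bkExt w0 F u)
      ≤ ∑ u : ↥F → Fin k, Real.exp (-t) * Real.exp (-bkU (bkcc μ p R K (bkExt w0 F u)) F) := by
        refine Finset.sum_le_sum fun u _ => ?_
        rw [hΦdef]
        simp only
        split_ifs with h
        · rw [mul_one]; exact h.le
        · rw [mul_zero]; positivity
    _ = Real.exp (-t) * ∑ u : ↥F → Fin k, Real.exp (-bkU (bkcc μ p R K (bkExt w0 F u)) F) := by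
        rw [Finset.mul_sum]
    _ ≤ _ := mul_le_mul_of_nonneg_left hw2 (Real.exp_pos _).le

theorem bk_compare {k : ℕ} (μ : Measure X) [IsProbabilityMeasure μ] [SMulInvariantMeasure G X μ]
    (p : X → Fin k) (hp : Measurable p) (R : ℝ) (hR : 0 ≤ R) (K : Finset G) (hK : 1 ∉ K) :
    ∃ M : ℝ, 0 ≤ M ∧ ∀ (F : Finset G) (x : X), bkU (bkcc μ p R K (bkw G p x)) F ≤
      ∑ g ∈ F, bkPhi μ p R K (bkw G p (g • x)) +
      M * (F.filter fun g => ¬ K.image (· * g) ⊆ F).card := by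
  have hb : ∀ B : Finset G, ∃ M : ℝ, 0 ≤ M ∧ ∀ w, |bkc μ p R 1 B w| ≤ M := fun B =>
    bk_local_bdd (insert 1 B) (bkc μ p R 1 B) (bkc_congr μ p R 1 B)
  choose Mf hM0 hM1 using hb
  have hM : ∀ B ⊆ K, ∀ w, bkc μ p R 1 B w ≤ ∑ B ∈ K.powerset, Mf B := by
    intro B hB w
    refine ((le_abs_self _).trans (hM1 B w)).trans ?_
    exact Finset.single_le_sum (f := Mf) (fun i _ => hM0 i) (Finset.mem_powerset.2 hB)
  refine ⟨∑ B ∈ K.powerset, Mf B, Finset.sum_nonneg fun B _ => hM0 B, fun F x => ?_⟩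
  set M := ∑ B ∈ K.powerset, Mf B
  have hterm : ∀ g ∈ F, bkE (bkcc μ p R K (bkw G p x) g) (F.erase g) ≤
      bkPhi μ p R K (bkw G p (g • x)) + if ¬ K.image (· * g) ⊆ F then M else 0 := by
    intro g hg
    by_cases h : ¬ K.image (· * g) ⊆ F
    · rw [if_pos h]
      have h1 : bkE (bkcc μ p R K (bkw G p x) g) (F.erase g) ≤ M := by
        refine bkE_le _ _ _ fun A _ => ?_
        unfold bkcc
        have h2 : A ∩ K.image (· * g) = ((A ∩ K.image (· * g)).image (· * g⁻¹)).image (· * g) := by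
          ext a
          simp only [Finset.mem_image, exists_exists_and_eq_and, inv_mul_cancel_right,
            exists_eq_right]
        rw [h2, bkc_image μ p hp]
        refine hM _ ?_ _
        intro a ha
        simp only [Finset.mem_image, Finset.mem_inter] at ha
        obtain ⟨b, ⟨_, c, hc, rfl⟩, rfl⟩ := ha
        simpa using hc
      have h3 : 0 ≤ bkPhi μ p R K (bkw G p (g • x)) :=
        bkE_nonneg _ _ fun A _ => bkc_nonneg μ p R hR _ _ _
      linarith
    · rw [if_neg h]
      rw [not_not] at h
      rw [add_zero, bkE_marg _ (K.image (· * g))]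
      · have h1 : F.erase g ∩ K.image (· * g) = K.image (· * g) := by
          rw [Finset.inter_eq_right]
          intro a ha
          refine Finset.mem_erase.2 ⟨?_, h ha⟩
          rintro rfl
          obtain ⟨b, hb, hb'⟩ := Finset.mem_image.1 ha
          have : b = 1 := by simpa using hb'
          exact hK (this ▸ hb)
        rw [h1, ← bkPhi_smul μ p hp]
        refine le_of_eq (bkE_congr _ _ _ fun A hA => ?_)
        unfold bkcc
        rw [Finset.inter_eq_left.2 hA]
      · intro A
        unfold bkcc
        rw [Finset.inter_assoc, Finset.inter_self]
  refine (Finset.sum_le_sum hterm).trans ?_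
  rw [Finset.sum_add_distrib, ← Finset.sum_filter, Finset.sum_const, nsmul_eq_mul, mul_comm M]

end HelpersF
section HelpersF2
open Classical Finset

theorem bk_boundary [Group G] (F : ℕ → Finset G) (hFol : IsFolnerSeq F) (K : Finset G) :
    Tendsto (fun n => (((F n).filter fun g => ¬ K.image (· * g) ⊆ F n).card : ℝ) / (F n).card)
      atTop (𝓝 0) := by
  have h1 : Tendsto (fun n => ∑ a ∈ K,
      ((symmDiff (F n : Set G) ((a * ·) '' (F n : Set G))).ncard : ℝ) / (F n).card) atTop (𝓝 0) := by
    have := tendsto_finsetSum K (fun a _ => hFol a)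
    simpa using this
  refine squeeze_zero (fun n => by positivity) (fun n => ?_) h1
  rw [← Finset.sum_div]
  refine div_le_div_of_nonneg_right ?_ (by positivity)
  have h2 : ((F n).filter fun g => ¬ K.image (· * g) ⊆ F n) ⊆
      K.biUnion fun a => (F n).filter fun g => a * g ∉ F n := by
    intro g hg
    obtain ⟨hg1, hg2⟩ := Finset.mem_filter.1 hg
    obtain ⟨b, hb, hb'⟩ := Finset.not_subset.1 hg2
    obtain ⟨a, ha, rfl⟩ := Finset.mem_image.1 hb
    exact Finset.mem_biUnion.2 ⟨a, ha, Finset.mem_filter.2 ⟨hg1, hb'⟩⟩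
  have h3 : ∀ a, ((F n).filter fun g => a * g ∉ F n).card ≤
      (symmDiff (F n : Set G) ((a * ·) '' (F n : Set G))).ncard := by
    intro a
    have hinj : Function.Injective (fun g : G => a * g) := mul_right_injective a
    rw [← Finset.card_image_of_injective _ hinj, ← Set.ncard_coe_finset]
    refine Set.ncard_le_ncard ?_ ?_
    · intro b hb
      obtain ⟨g, hg, rfl⟩ := Finset.mem_image.1 (Finset.mem_coe.1 hb)
      obtain ⟨hg1, hg2⟩ := Finset.mem_filter.1 hg
      exact Or.inr ⟨⟨g, hg1, rfl⟩, hg2⟩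
    · rw [Set.symmDiff_def]
      exact ((F n).finite_toSet.sdiff).union (((F n).finite_toSet.image _).sdiff)
  exact_mod_cast (Finset.card_le_card h2).trans
    (Finset.card_biUnion_le.trans (Finset.sum_le_sum fun a _ => h3 a))

theorem bk_hcard (F : ℕ → Finset G) (h : GrowthCond F) :
    Tendsto (fun n => (F n).card) atTop atTop := by
  rw [← tendsto_natCast_atTop_iff (R := ℝ)]
  have hlog : Tendsto (fun n : ℕ => Real.log n) atTop atTop :=
    Real.tendsto_log_atTop.comp tendsto_natCast_atTop_atTop
  refine tendsto_atTop_mono' _ ?_ hlog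
  filter_upwards [h.eventually_ge_atTop 1, hlog.eventually_gt_atTop 0] with n h1 h2
  rw [le_div_iff₀ h2] at h1
  linarith

theorem bk_summable (F : ℕ → Finset G) (h : GrowthCond F) (ε : ℝ) (hε : 0 < ε) :
    Summable (fun n => Real.exp (-(ε * (F n).card))) := by
  have hlog : Tendsto (fun n : ℕ => Real.log n) atTop atTop :=
    Real.tendsto_log_atTop.comp tendsto_natCast_atTop_atTop
  refine Summable.of_norm_bounded_eventually_nat (g := fun n : ℕ => 1 / (n : ℝ) ^ 2)
    (Real.summable_one_div_nat_pow.2 one_lt_two) ?_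
  filter_upwards [h.eventually_ge_atTop (2 / ε), hlog.eventually_gt_atTop 0,
    eventually_gt_atTop 0] with n h1 h2 h3
  have h3' : (0:ℝ) < n := by exact_mod_cast h3
  rw [Real.norm_of_nonneg (Real.exp_pos _).le]
  have h4 : 1 / (n : ℝ) ^ 2 = Real.exp (-(2 * Real.log n)) := by
    rw [Real.exp_neg, one_div, mul_comm, Real.exp_mul, Real.exp_log h3']
    norm_num
  rw [h4]
  refine Real.exp_le_exp.2 (neg_le_neg ?_)
  rw [le_div_iff₀ h2, div_mul_eq_mul_div, div_le_iff₀ hε] at h1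
  linarith

end HelpersF2
section HelpersH

open Classical Finset

theorem bk_smb [Group G] [Countable G] [MetricSpace X] [MulAction G X] [MeasurableSpace X]
    [MeasurableConstSMul G X]
    (μ : Measure X) [IsProbabilityMeasure μ] [SMulInvariantMeasure G X μ]
    (herg : IsErgodicGAction G μ) (F : ℕ → Finset G) (hFol : IsFolnerSeq F)
    (hTemp : IsTemperedSeq F) (hGrow : GrowthCond F) {k : ℕ} (p : X → Fin k) (hp : Measurable p)
    (ε : ℝ) (hε : 0 < ε) :
    ∀ᵐ x ∂μ, ∀ᶠ n in atTop, -Real.log (bkM μ p (F n) (bkw G p x)) ≤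
      (F n).card * (partEnt μ F (fun i => p ⁻¹' {i}) + 5 * ε) := by
  have hcard := bk_hcard F hGrow
  -- choice of `R`
  obtain ⟨R, hR, hRD⟩ : ∃ R : ℝ, 0 ≤ R ∧ 1 + k * Real.exp (-R) ≤ Real.exp ε := by
    have h1 : Tendsto (fun R : ℝ => 1 + k * Real.exp (-R)) atTop (𝓝 (1 + k * 0)) :=
      (Real.tendsto_exp_neg_atTop_nhds_zero.const_mul _).const_add _
    have h2 : 1 + (k : ℝ) * 0 < Real.exp ε := by simpa using hε
    obtain ⟨R, hR1, hR2⟩ := ((h1.eventually (gt_mem_nhds h2)).and (eventually_ge_atTop 0)).exists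
    exact ⟨R, hR2, hR1.le⟩
  -- choice of `m`
  have hbdd : IsCoboundedUnder (· ≥ ·) atTop
      (fun n => partH μ (fun i => p ⁻¹' {i}) (F n) / (F n).card) := by
    refine IsBoundedUnder.isCoboundedUnder_ge ⟨Real.log k, ?_⟩
    rw [eventually_map]
    filter_upwards [hcard.eventually_ge_atTop 1] with n hn
    have hpos : (0:ℝ) < (F n).card := by exact_mod_cast hn
    rw [div_le_iff₀ hpos, mul_comm]
    exact bk_partH_le μ p hp _
  obtain ⟨m, hm1, hm2⟩ := ((frequently_lt_of_liminf_lt hbdd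
    (show partEnt μ F (fun i => p ⁻¹' {i}) < partEnt μ F (fun i => p ⁻¹' {i}) + ε by
      linarith)).and_eventually (hcard.eventually_ge_atTop 1)).exists
  obtain ⟨K, hK, hKint⟩ := bk_exists_K μ p hp R (F m) (Finset.card_pos.1 hm2)
  obtain ⟨M, hM0, hM⟩ := bk_compare μ p hp R hR K hK
  have herg' := bk_ergodic μ herg F hFol hTemp hcard (fun x => bkPhi μ p R K (bkw G p x))
    (bk_local_meas p hp _ _ (bkPhi_congr μ p R K)) (bkPhi_integrable μ p hp R K 2) ε hε
  have hbc : ∀ᵐ x ∂μ, ∀ᶠ n in atTop, x ∉ {x | bkM μ p (F n) (bkw G p x) <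
      Real.exp (-(2 * ε * (F n).card)) *
      Real.exp (-bkU (bkcc μ p R K (bkw G p x)) (F n))} := by
    refine ae_eventually_notMem (ne_top_of_le_ne_top
      (bk_summable F hGrow ε hε).tsum_ofReal_ne_top (ENNReal.tsum_le_tsum fun n => ?_))
    rw [← ofReal_measureReal (measure_ne_top μ _)]
    refine ENNReal.ofReal_le_ofReal ((bk_barron μ p hp R K (F n) _).trans ?_)
    calc Real.exp (-(2 * ε * (F n).card)) * (1 + k * Real.exp (-R)) ^ (F n).card
        ≤ Real.exp (-(2 * ε * (F n).card)) * (Real.exp ε) ^ (F n).card := by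
          refine mul_le_mul_of_nonneg_left ?_ (Real.exp_pos _).le
          exact pow_le_pow_left₀ (by positivity) hRD _
      _ = Real.exp (-(ε * (F n).card)) := by
          rw [← Real.exp_nat_mul, ← Real.exp_add]
          congr 1
          ring
  have hbd : ∀ᶠ n in atTop,
      M * ((F n).filter fun g => ¬ K.image (· * g) ⊆ F n).card ≤ ε * (F n).card := by
    have h1 := (bk_boundary F hFol K).const_mul M
    rw [mul_zero] at h1
    filter_upwards [h1.eventually (gt_mem_nhds hε), hcard.eventually_ge_atTop 1] with n h2 h3
    have hpos : (0:ℝ) < (F n).card := by exact_mod_cast h3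
    rw [← mul_div_assoc, div_lt_iff₀ hpos] at h2
    exact h2.le
  filter_upwards [herg', hbc, bkM_pos_ae (G := G) μ p hp] with x hx1 hx2 hx3
  filter_upwards [hx1, hx2, hbd] with n h1 h2 h3
  simp only [Set.mem_ofPred_eq, not_lt] at h2
  have h4 := Real.log_le_log (by positivity) h2
  rw [← Real.exp_add, Real.log_exp] at h4
  have h5 := hM (F n) x
  have h6 : ((F n).card : ℝ) * (∫ y, bkPhi μ p R K (bkw G p y) ∂μ + ε) ≤
      (F n).card * (partEnt μ F (fun i => p ⁻¹' {i}) + ε + ε) :=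
    mul_le_mul_of_nonneg_left (by linarith) (by positivity)
  linarith

theorem bk_partition [MetricSpace X] [CompactSpace X] [Nonempty X] [MeasurableSpace X]
    [BorelSpace X] (δ : ℝ) (hδ : 0 < δ) :
    ∃ (k : ℕ) (p : X → Fin k), Measurable p ∧ ∀ x y, p x = p y → dist x y < δ := by
  obtain ⟨t, _, ht, hcov⟩ := finite_cover_balls_of_compact (isCompact_univ (X := X))
    (show 0 < δ / 2 by positivity)
  have hne : Nonempty t := by
    obtain ⟨x⟩ := ‹Nonempty X›
    obtain ⟨i, hi, _⟩ := Set.mem_iUnion₂.1 (hcov (Set.mem_univ x))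
    exact ⟨⟨i, hi⟩⟩
  have : Finite t := ht
  obtain ⟨n, ⟨e⟩⟩ := Finite.exists_equiv_fin t
  have hex : ∀ x : X, ∃ j : Fin n, dist x (e.symm j) < δ / 2 := by
    intro x
    obtain ⟨i, hi, hx⟩ := Set.mem_iUnion₂.1 (hcov (Set.mem_univ x))
    exact ⟨e ⟨i, hi⟩, by simpa using hx⟩
  have hex' : ∀ x : X, ∃ m : ℕ, ∃ h : m < n, dist x (e.symm ⟨m, h⟩) < δ / 2 := by
    intro x
    obtain ⟨j, hj⟩ := hex x
    exact ⟨j, j.2, hj⟩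
  have hmeas : Measurable (fun x => Nat.find (hex' x)) := by
    refine measurable_find hex' fun m => ?_
    by_cases h : m < n
    · have : {x : X | ∃ h : m < n, dist x (e.symm ⟨m, h⟩) < δ / 2} =
          Metric.ball ((e.symm ⟨m, h⟩ : t) : X) (δ / 2) := by
        ext x; simp [h]
      rw [this]
      exact Metric.isOpen_ball.measurableSet
    · have : {x : X | ∃ h : m < n, dist x (e.symm ⟨m, h⟩) < δ / 2} = ∅ := by
        ext x; simp [h]
      rw [this]
      exact MeasurableSet.empty
  refine ⟨n, fun x => ⟨Nat.find (hex' x), (Nat.find_spec (hex' x)).1⟩, ?_, ?_⟩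
  · refine measurable_to_countable' fun j => ?_
    have : (fun x => (⟨Nat.find (hex' x), (Nat.find_spec (hex' x)).1⟩ : Fin n)) ⁻¹' {j} =
        (fun x => Nat.find (hex' x)) ⁻¹' {(j : ℕ)} := by
      ext x; simp [Fin.ext_iff]
    rw [this]
    exact hmeas (measurableSet_singleton _)
  · intro x y hxy
    obtain ⟨_, h1⟩ := Nat.find_spec (hex' x)
    obtain ⟨_, h2⟩ := Nat.find_spec (hex' y)
    have h3 : Nat.find (hex' x) = Nat.find (hex' y) := Fin.ext_iff.1 hxy
    simp only [h3] at h1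
    have := dist_triangle_right x y ((e.symm ⟨Nat.find (hex' y), by assumption⟩ : t) : X)
    linarith

end HelpersH

/-- upper bound in the Brin–Katok formula. For a `G`-invariant ergodic
Borel probability measure `μ` and a tempered Følner sequence `{F_n}` with
`lim_n |F_n|/log n = ∞`, for every `δ > 0` and `μ`-a.e. `x`,
`limsup_n -(1/|F_n|) log μ(B_{F_n}(x,δ)) ≤ h_μ(X,G)`. -/
theorem brin_katok_upper
    [Group G] [Countable G] [MetricSpace X] [CompactSpace X]
    [MulAction G X] [ContinuousConstSMul G X] [MeasurableSpace X] [BorelSpace X]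
    (μ : Measure X) [IsProbabilityMeasure μ] [SMulInvariantMeasure G X μ]
    (herg : IsErgodicGAction G μ)
    (F : ℕ → Finset G) (hFol : IsFolnerSeq F) (hTemp : IsTemperedSeq F)
    (hGrow : GrowthCond F) :
    ∀ δ : ℝ, 0 < δ → ∀ᵐ x ∂μ, upLoc μ F x δ ≤ measEnt μ F := by
  classical
  intro δ hδ
  have hX : Nonempty X := nonempty_of_isProbabilityMeasure μ
  obtain ⟨k, p, hp, hpd⟩ := bk_partition (X := X) δ hδ
  have hcard := bk_hcard F hGrow
  set h := partEnt μ F (fun i => p ⁻¹' {i}) with hh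
  have hP : IsMeasPartition (fun i => p ⁻¹' {i}) := by
    refine ⟨fun i => hp (measurableSet_singleton i), ?_, ?_⟩
    · intro i j hij
      refine Set.disjoint_left.2 fun x hx hx' => hij ?_
      exact (Set.mem_singleton_iff.1 hx).symm.trans (Set.mem_singleton_iff.1 hx')
    · ext x; simp
  have hle : ENNReal.ofReal h ≤ measEnt μ F :=
    le_iSup_of_le k (le_iSup_of_le (fun i => p ⁻¹' {i}) (le_iSup_of_le hP le_rfl))
  have hall : ∀ᵐ x ∂μ, ∀ j : ℕ, ∀ᶠ n in atTop, -Real.log (bkM μ p (F n) (bkw G p x)) ≤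
      (F n).card * (h + 5 * (1 / ((j : ℝ) + 1))) := by
    rw [ae_all_iff]
    intro j
    exact bk_smb μ herg F hFol hTemp hGrow p hp _ (by positivity)
  filter_upwards [hall, bkM_pos_ae (G := G) μ p hp] with x hx hpos
  have hub : ∀ j : ℕ, upLoc μ F x δ ≤ ENNReal.ofReal (h + 5 * (1 / ((j : ℝ) + 1))) := by
    intro j
    refine limsup_le_of_le (by isBoundedDefault) ?_
    filter_upwards [hx j, hcard.eventually_ge_atTop 1] with n h1 h2
    have hsub : bkCyl p (F n) (bkw G p x) ⊆ bowenBall (F n) x δ := by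
      intro y hy g hg
      exact hpd _ _ (hy g hg).symm
    have hmono : bkM μ p (F n) (bkw G p x) ≤ μ.real (bowenBall (F n) x δ) :=
      measureReal_mono hsub (measure_ne_top μ _)
    have hpos' := (hpos (F n)).trans_le hmono
    have hne : μ (bowenBall (F n) x δ) ≠ 0 := by
      intro h0
      rw [measureReal_def, h0] at hpos'
      simp at hpos'
    unfold locTerm
    rw [if_neg hne]
    refine ENNReal.ofReal_le_ofReal ?_
    have hc : (0:ℝ) < (F n).card := by exact_mod_cast h2
    rw [div_le_iff₀ hc, mul_comm]
    have h3 := Real.log_le_log (hpos (F n)) hmono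
    rw [measureReal_def] at h3
    linarith
  have hlim : Tendsto (fun j : ℕ => ENNReal.ofReal (h + 5 * (1 / ((j : ℝ) + 1)))) atTop
      (𝓝 (ENNReal.ofReal (h + 5 * 0))) :=
    ENNReal.tendsto_ofReal ((tendsto_one_div_add_atTop_nhds_zero_nat.const_mul 5).const_add h)
  rw [mul_zero, add_zero] at hlim
  exact (ge_of_tendsto' hlim hub).trans hle
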